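/- arXiv:1508.03871 — 11 statements merged into one kernel-verified Lean document; each statement's English description precedes it below -/
import Mathlib

section
/- Fix $\alpha\in(0,1)$, integers $N\ge 1$, $M\ge 0$, $V\ge 1$ with $M+V<N$, a set $\mathcal N\subseteq[N]$ with $|\mathcal N|=V$, and $\mathcal I\subseteq[N]\setminus\mathcal N$ with $|\mathcal I|=M$. For each $K$, let $S_1,\dots,S_K$ be i.i.d. random subsets of $[N]$ with the conditioned Bernoulli$(\alpha)$ law, and set $X_i=\{k\in[K]: i\in S_k\}$. Then for every $\epsilon>0$, $\Pr\Bigl(\Bigl|\tfrac1K\bigl|\bigcap_{i\in([N]\setminus\mathcal N)\setminus\mathcal I}\overline X_{i,\mathcal I}\bigr| - Z_{M,V}\Bigr|<\epsilon\Bigr)\to 1$ as $K\to\infty$, where $Z_{M,V}=\dfrac{(1-\alpha)^{-M-V}-(1-\alpha)^{-M}}{(1-\alpha)^{-N}-1}$. -/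
/-!
A coordinate `k` lies in the intersection of the sets `X̄_{i,I}` exactly when `S_k ⊆ 𝒩 ∪ I` and
`S_k ⊄ I`, so the normalized cardinality is the empirical frequency of one fixed event, and it
converges in probability to the mass of that event by Chebyshev's inequality. A `Bernoulli(α)`
random subset avoids a finite set `F` with probability `(1 - α) ^ |F|`. Since the event excludes the
empty set, conditioning on nonemptiness only divides its mass by `1 - (1 - α) ^ N`.
-/

open Filter MeasureTheory ProbabilityTheory Topology

section WeakLaw

variable {Ω : Type*} [MeasurableSpace Ω] {μ : Measure Ω} [IsProbabilityMeasure μ]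

theorem measureReal_pi_abs_sampleMean_sub_integral_ge_le {κ : Type*} [Fintype κ] [Nonempty κ]
    {X : Ω → ℝ} (hX : MemLp X 2 μ) {ε : ℝ} (hε : 0 < ε) :
    (Measure.pi fun _ : κ ↦ μ).real {ω | ε ≤ |(∑ k, X (ω k)) / Fintype.card κ - μ[X]|} ≤
      Var[X; μ] / ε ^ 2 / Fintype.card κ := by
  have hn : (Fintype.card κ : ℝ) ≠ 0 := mod_cast Fintype.card_ne_zero
  set ν := Measure.pi fun _ : κ ↦ μ
  have hcoord (k : κ) : MemLp (fun ω : κ → Ω ↦ X (ω k)) 2 ν :=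
    hX.comp_measurePreserving (measurePreserving_eval _ k)
  have hmean : ∫ ω, (∑ k, X (ω k)) / Fintype.card κ ∂ν = μ[X] := by
    rw [integral_div, integral_finsetSum _ fun k _ ↦ (hcoord k).integrable one_le_two]
    simp only [ν, integral_comp_eval (μ := fun _ : κ ↦ μ) hX.aestronglyMeasurable,
      Finset.sum_const, Finset.card_univ, nsmul_eq_mul]
    exact mul_div_cancel_left₀ _ hn
  have hvar : Var[fun ω ↦ (∑ k, X (ω k)) / Fintype.card κ; ν] = Var[X; μ] / Fintype.card κ := by
    have hsum : Var[fun ω ↦ ∑ k, X (ω k); ν] = Fintype.card κ * Var[X; μ] := by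
      simpa [Finset.sum_fn] using variance_sum_pi (μ := fun _ : κ ↦ μ) fun _ ↦ hX
    simp only [div_eq_inv_mul, variance_const_mul, hsum]
    field_simp
  have hmem : MemLp (fun ω : κ → Ω ↦ (∑ k, X (ω k)) / Fintype.card κ) 2 ν := by
    simpa only [div_eq_inv_mul] using (memLp_finsetSum _ fun k _ ↦ hcoord k).const_mul _
  have chebyshev := meas_ge_le_variance_div_sq hmem hε
  rw [hmean, hvar, div_right_comm] at chebyshev
  have hvar_nonneg := variance_nonneg X μ
  exact ENNReal.toReal_le_of_le_ofReal (by positivity) chebyshev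

theorem tendsto_measureReal_pi_abs_sampleMean_sub_integral_lt {X : Ω → ℝ} (hX : MemLp X 2 μ)
    {ε : ℝ} (hε : 0 < ε) :
    Tendsto (fun K : ℕ ↦ (Measure.pi fun _ : Fin K ↦ μ).real
      {ω | |(∑ k, X (ω k)) / K - μ[X]| < ε}) atTop (𝓝 1) := by
  have hlower : Tendsto (fun K : ℕ ↦ 1 - Var[X; μ] / ε ^ 2 / K) atTop (𝓝 1) := by
    simpa using (tendsto_const_div_atTop_nhds_zero_nat (Var[X; μ] / ε ^ 2)).const_sub 1
  refine tendsto_of_tendsto_of_tendsto_of_le_of_le' hlower tendsto_const_nhds ?_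
    (.of_forall fun K ↦ measureReal_le_one)
  filter_upwards [eventually_ne_atTop 0] with K hK
  have : NeZero K := ⟨hK⟩
  have htail := measureReal_pi_abs_sampleMean_sub_integral_ge_le (κ := Fin K) hX hε
  have hcover := measureReal_union_le (μ := Measure.pi fun _ : Fin K ↦ μ)
    {ω | |(∑ k, X (ω k)) / K - μ[X]| < ε} {ω | ε ≤ |(∑ k, X (ω k)) / K - μ[X]|}
  rw [← Set.ofPred_or] at hcover
  simp only [lt_or_ge, Set.ofPred_true, probReal_univ] at hcover
  rw [Fintype.card_fin] at htail
  linarith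

open Classical in
theorem tendsto_measureReal_pi_abs_frequency_sub_lt {A : Set Ω} (hA : MeasurableSet A)
    {ε : ℝ} (hε : 0 < ε) :
    Tendsto (fun K : ℕ ↦ (Measure.pi fun _ : Fin K ↦ μ).real
      {ω | |(({k | ω k ∈ A} : Finset (Fin K)).card : ℝ) / K - μ.real A| < ε}) atTop (𝓝 1) := by
  have hX : MemLp (A.indicator 1) 2 μ :=
    memLp_indicator_const 2 hA (1 : ℝ) (.inr (measure_ne_top μ A))
  have h := tendsto_measureReal_pi_abs_sampleMean_sub_integral_lt hX hε
  rw [integral_indicator_one hA] at h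
  simpa only [Set.indicator_apply, Pi.one_apply, Finset.sum_boole] using h

end WeakLaw

theorem measureReal_pi_setOf_eq_sum {κ σ τ : Type*} [Fintype κ] [DecidableEq κ] [Fintype τ]
    [MeasurableSpace σ] [MeasurableSingletonClass σ] (μ : Measure σ) [IsFiniteMeasure μ]
    (e : τ ≃ σ) (P : (κ → σ) → Prop) [DecidablePred fun ω : κ → τ ↦ P (e ∘ ω)] :
    (Measure.pi fun _ : κ ↦ μ).real {x | P x} =
      ∑ ω : κ → τ, if P (e ∘ ω) then ∏ k, μ.real {e (ω k)} else 0 := by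
  have himage : {x | P x} = (({ω | P (e ∘ ω)} : Finset (κ → τ)).map
      ((Equiv.refl κ).arrowCongr e).toEmbedding : Set (κ → σ)) := by
    ext x
    obtain ⟨ω, rfl⟩ := ((Equiv.refl κ).arrowCongr e).surjective x
    simp [Equiv.arrowCongr, e.injective.comp_left.eq_iff]
  rw [himage, ← sum_measureReal_singleton, Finset.sum_map, Finset.sum_filter]
  simp [measureReal_def, Measure.pi_singleton, ENNReal.toReal_prod]

theorem setBernoulli_real_powerset_compl {ι : Type*} {u : Set ι} (p : unitInterval)
    {F : Finset ι} (hF : ↑F ⊆ u) :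
    (setBernoulli u p).real (𝒫 (↑F)ᶜ) = (1 - p : ℝ) ^ F.card := by
  have hbox : (fun q : ι → Prop ↦ {i | q i}) ⁻¹' (𝒫 (↑F)ᶜ) = Set.pi F fun _ ↦ {False} := by
    ext q
    have hcontra (i : ι) : (q i → i ∉ F) ↔ (i ∈ F → ¬ q i) := imp_not_comm
    simpa [Set.subset_def] using forall_congr' hcontra
  have hcoord (i : ι) (hi : i ∈ F) :
      (unitInterval.toNNReal p • Measure.dirac (i ∈ u) +
        unitInterval.toNNReal (unitInterval.symm p) • Measure.dirac False) {False} =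
      unitInterval.toNNReal (unitInterval.symm p) := by
    have hiu : i ∈ u := hF hi
    simp [hiu]
  rw [measureReal_def, setBernoulli_apply', hbox, Measure.infinitePi_pi _ (by simp),
    Finset.prod_congr rfl hcoord]
  simp

/-- The conditioned Bernoulli law: a random subset of `ι` containing each point independently with
probability `p`, conditioned on being nonempty. For `p = 0` or empty `ι`, where the conditioning
event is null, this is the zero measure. -/
noncomputable def condSetBernoulli (ι : Type*) (p : unitInterval) : Measure (Set ι) :=
  (setBernoulli Set.univ p)[|{∅}ᶜ]

section CondSetBernoulli

variable {ι : Type*} [Fintype ι] {p : unitInterval}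

theorem setBernoulli_univ_real_compl_singleton_empty :
    (setBernoulli (Set.univ : Set ι) p).real {∅}ᶜ = 1 - (1 - p : ℝ) ^ Fintype.card ι := by
  rw [probReal_compl_eq_one_sub (.singleton _),
    setBernoulli_real_singleton p (Set.empty_subset _) Set.finite_univ]
  simp [Set.ncard_univ]

theorem condSetBernoulli_real_apply (E : Set (Set ι)) :
    (condSetBernoulli ι p).real E =
      (setBernoulli Set.univ p).real (E \ {∅}) / (1 - (1 - p : ℝ) ^ Fintype.card ι) := by
  rw [condSetBernoulli, measureReal_def, cond_apply .of_discrete, ENNReal.toReal_mul,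
    ENNReal.toReal_inv, ← measureReal_def, ← measureReal_def,
    setBernoulli_univ_real_compl_singleton_empty, inv_mul_eq_div, Set.inter_comm, Set.sdiff_eq]

theorem condSetBernoulli_real_singleton [DecidableEq ι] (s : Finset ι) :
    (condSetBernoulli ι p).real {↑s} = if s = ∅ then 0 else
      (p : ℝ) ^ s.card * (1 - p) ^ (Fintype.card ι - s.card) /
        (1 - (1 - p) ^ Fintype.card ι) := by
  rw [condSetBernoulli_real_apply]
  split_ifs with hs
  · simp [hs]
  · have hne : ({↑s} : Set (Set ι)) \ {∅} = {↑s} := by simpa using hs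
    rw [hne, setBernoulli_real_singleton p (Set.subset_univ _) Set.finite_univ,
      ← Finset.coe_univ, ← Finset.coe_sdiff]
    simp only [Set.ncard_coe_finset, Finset.card_univ_sdiff]

theorem condSetBernoulli_real_powerset_sdiff_powerset {A I : Finset ι} (hIA : I ⊆ A) :
    (condSetBernoulli ι p).real (𝒫 ↑A \ 𝒫 ↑I) =
      ((1 - p : ℝ) ^ (Fintype.card ι - A.card) - (1 - p) ^ (Fintype.card ι - I.card)) /
        (1 - (1 - p) ^ Fintype.card ι) := by
  classical
  have hpow (T : Finset ι) : (setBernoulli Set.univ p).real (𝒫 (↑T : Set ι)) =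
      (1 - p : ℝ) ^ (Fintype.card ι - T.card) := by
    simpa [Finset.card_compl] using
      setBernoulli_real_powerset_compl p (Set.subset_univ ((Tᶜ : Finset ι) : Set ι))
  have hE : (𝒫 ↑A \ 𝒫 (↑I : Set ι)) \ {∅} = 𝒫 ↑A \ 𝒫 ↑I := by
    simp
  have hsub : 𝒫 (↑I : Set ι) ⊆ 𝒫 ↑A := Set.powerset_mono.2 (Finset.coe_subset.2 hIA)
  rw [condSetBernoulli_real_apply, hE, measureReal_sdiff hsub .of_discrete, hpow, hpow]

end CondSetBernoulli

theorem isProbabilityMeasure_condSetBernoulli {ι : Type*} [Finite ι] [Nonempty ι]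
    {p : unitInterval} (hp : p ≠ 0) :
    IsProbabilityMeasure (condSetBernoulli ι p) := by
  have := Fintype.ofFinite ι
  have hp0 : 0 < (p : ℝ) := unitInterval.pos_iff_ne_zero.2 hp
  have hempty : (1 - p : ℝ) ^ Fintype.card ι < 1 :=
    pow_lt_one₀ (sub_nonneg.2 p.2.2) (sub_lt_self 1 hp0) Fintype.card_ne_zero
  refine cond_isProbabilityMeasure fun hnull ↦ ?_
  rw [← measureReal_eq_zero_iff, setBernoulli_univ_real_compl_singleton_empty] at hnull
  linarith

theorem pow_sub_sub_pow_sub_div_one_sub_pow {F : Type*} [Field F] {b : F} (hb : b ≠ 0)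
    {m n N : ℕ} (hm : m ≤ N) (hn : n ≤ N) :
    (b ^ (N - m) - b ^ (N - n)) / (1 - b ^ N) =
      (b ^ (-(m : ℤ)) - b ^ (-(n : ℤ))) / (b ^ (-(N : ℤ)) - 1) := by
  have hbN : b ^ N ≠ 0 := pow_ne_zero N hb
  rw [← mul_div_mul_left _ (b ^ (-(N : ℤ)) - 1) hbN]
  simp only [zpow_neg, zpow_natCast, pow_sub₀ b hb, hm, hn, mul_sub, mul_inv_cancel₀ hbN, mul_one]

theorem inf_biUnion_sdiff_eq_filter {ι κ : Type*} [Fintype ι] [DecidableEq ι] [Fintype κ]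
    [DecidableEq κ] (s : κ → Finset ι) {A I : Finset ι} (hAI : A ∪ I ≠ Finset.univ) :
    ((Aᶜ \ I).inf fun i ↦
        (Iᶜ.biUnion fun j ↦ ({k | j ∈ s k} : Finset κ)) \ ({k | i ∈ s k} : Finset κ)) =
      ({k | s k ⊆ A ∪ I ∧ ¬ s k ⊆ I} : Finset κ) := by
  ext k
  simp only [Finset.mem_inf, Finset.mem_sdiff, Finset.mem_compl, Finset.mem_biUnion,
    Finset.mem_filter, Finset.mem_univ, true_and, Finset.not_subset]
  constructor
  · intro h
    obtain ⟨i, hi⟩ : ∃ i, i ∉ A ∪ I := by simpa [Finset.eq_univ_iff_forall] using hAI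
    grind
  · grind

open Classical in
/-- Lemma 5 of the paper: Fix `α ∈ (0,1)`, `M ≥ 0`, `V ≥ 1` with `M + V < N`,
a set `𝒩 ⊆ [N]` with `|𝒩| = V` and `I ⊆ [N] \ 𝒩` with `|I| = M`.  For each `K`, let
`S 1, …, S K` be i.i.d. random subsets of `[N]` with the conditioned Bernoulli(α) law
(an outcome is `ω : Fin K → Finset (Fin N)`, with probability `∏ k, w (ω k)` where
`w s = α^|s| (1-α)^(N-|s|) / (1-(1-α)^N)` for `s ≠ ∅` and `w ∅ = 0`), and let
`X i = {k ∈ [K] : i ∈ S k}`.  Then for every `ε > 0`, the probability that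
`| (1/K) |⋂_{i ∈ ([N] \ 𝒩) \ I} X̄_{i,I}| - Z_{M,V} | < ε` tends to `1` as `K → ∞`,
where `X̄_{i,I} = (⋃_{j ∉ I} X j) \ X i` and
`Z_{M,V} = ((1-α)^{-M-V} - (1-α)^{-M}) / ((1-α)^{-N} - 1)`. -/
theorem stmt_4 (α : ℝ) (hα0 : 0 < α) (hα1 : α < 1) (N M V : ℕ) (hV : 1 ≤ V)
    (hMVN : M + V < N) (𝒩 : Finset (Fin N)) (h𝒩 : 𝒩.card = V)
    (I : Finset (Fin N)) (hI𝒩 : I ⊆ 𝒩ᶜ) (hI : I.card = M)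
    (ε : ℝ) (hε : 0 < ε) :
    Filter.Tendsto (fun K : ℕ =>
      ∑ ω : Fin K → Finset (Fin N),
        (if
            abs ((((𝒩ᶜ \ I).inf fun i =>
                  (Iᶜ.biUnion fun j => Finset.univ.filter fun k : Fin K => j ∈ ω k) \
                    (Finset.univ.filter fun k : Fin K => i ∈ ω k)).card : ℝ) / K
              - ((1 - α) ^ (-((M : ℤ) + (V : ℤ))) - (1 - α) ^ (-(M : ℤ))) /
                  ((1 - α) ^ (-(N : ℤ)) - 1)) < ε
          then ∏ k : Fin K,
            (if ω k = ∅ then 0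
              else α ^ (ω k).card * (1 - α) ^ (N - (ω k).card) / (1 - (1 - α) ^ N))
          else 0))
      Filter.atTop (nhds 1) := by
  let p : unitInterval := ⟨α, hα0.le, hα1.le⟩
  have : NeZero N := ⟨by lia⟩
  have hp : p ≠ 0 := unitInterval.pos_iff_ne_zero.1 hα0
  have := isProbabilityMeasure_condSetBernoulli (ι := Fin N) hp
  have hcard : (𝒩 ∪ I).card = M + V := by
    rw [Finset.card_union_of_disjoint (Finset.subset_compl_iff_disjoint_left.1 hI𝒩), h𝒩, hI,
      add_comm]
  have huniv : 𝒩 ∪ I ≠ Finset.univ :=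
    (Finset.card_lt_iff_ne_univ _).1 (by rwa [hcard, Fintype.card_fin])
  have hZ : (condSetBernoulli (Fin N) p).real (𝒫 ↑(𝒩 ∪ I) \ 𝒫 ↑I) =
      ((1 - α) ^ (-((M : ℤ) + (V : ℤ))) - (1 - α) ^ (-(M : ℤ))) / ((1 - α) ^ (-(N : ℤ)) - 1) := by
    rw [condSetBernoulli_real_powerset_sdiff_powerset Finset.subset_union_right, hcard, hI,
      Fintype.card_fin,
      pow_sub_sub_pow_sub_div_one_sub_pow (sub_ne_zero.2 hα1.ne') hMVN.le (by lia), Nat.cast_add]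
  rw [← hZ]
  refine (tendsto_measureReal_pi_abs_frequency_sub_lt (μ := condSetBernoulli (Fin N) p)
    (.of_discrete (s := 𝒫 ↑(𝒩 ∪ I) \ 𝒫 ↑I)) hε).congr fun K ↦ ?_
  rw [measureReal_pi_setOf_eq_sum _ Fintype.finsetEquivSet]
  simp only [inf_biUnion_sdiff_eq_filter _ huniv, condSetBernoulli_real_singleton,
    Fintype.finsetEquivSet_apply, Fintype.card_fin, Function.comp_apply, Set.mem_sdiff,
    Set.mem_powerset_iff, Finset.coe_subset, p]
end

section
/- Let integers $M\ge 0$, $Q\ge 1$, $0\le R\le M$, $N=(M+1)(Q+1)-R$, $P=N-M-1$, and let real numbers $k_1\ge k_2\ge\dots\ge k_{N-M}$ be given. Define $\tilde r=\tfrac1P\sum_{i=1}^{Q}k_i+\tfrac{P-Q+1}{P}k_{Q+1}$ and $\tilde r_i=\tilde r-k_i$ for $1\le i\le Q$, $\tilde r_i=\tilde r-k_{Q+1}$ for $Q<i\le N$. Then $(\tilde r_1,\dots,\tilde r_N)$ satisfies every constraint of LP(9): for every $j\in[N-M]$ and every $\mathcal N\subseteq[N]\setminus\{j\}$ with $|\mathcal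 N|=P$ and $\{1,\dots,j-1\}\subseteq\mathcal N$, one has $\sum_{i\in\mathcal N}\tilde r_i\ge k_j$. -/
/-!
Replace `k` off the top block `A = {1, …, Q}` by the constant `K = k (Q + 1)`, and call the
result `c`, so that `r̃ i = r̃ - c i` and `k j ≤ c j`. The value of `r̃` is chosen so that `P r̃`
is the sum of `c` over `A` and `P + 1 - Q` further indices. As `c` is at least `K` on `A` and
equal to `K` elsewhere, this is the largest sum of `c` over any `P + 1` indices, in particular
over `𝒩 ∪ {j}`; hence `∑_{i ∈ 𝒩} (r̃ - c i) ≥ c j ≥ k j`.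
-/

section

open Finset

section OrderedSums

variable {ι α : Type*} [DecidableEq ι] {A S T : Finset ι} {k : ι → α} {K r : α} {j : ι}

theorem sum_piecewise_const_add_card_nsmul_le [AddCommMonoid α] [PartialOrder α]
    [IsOrderedAddMonoid α] (hK : ∀ i ∈ A, K ≤ k i) (T : Finset ι) :
    ∑ i ∈ T, A.piecewise k (fun _ ↦ K) i + #A • K ≤ ∑ i ∈ A, k i + #T • K := by
  have hdiff : #(A \ T) • K ≤ ∑ i ∈ A \ T, k i :=
    card_nsmul_le_sum _ _ _ fun i hi ↦ hK i (mem_sdiff.1 hi).1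
  calc ∑ i ∈ T, A.piecewise k (fun _ ↦ K) i + #A • K
      = ∑ i ∈ A ∩ T, k i + #(A \ T) • K + (#(T ∩ A) • K + #(T \ A) • K) := by
        rw [sum_piecewise, sum_const, ← card_inter_add_card_sdiff A T, add_nsmul, inter_comm T A]
        abel
    _ ≤ ∑ i ∈ A ∩ T, k i + ∑ i ∈ A \ T, k i + (#(T ∩ A) • K + #(T \ A) • K) := by gcongr
    _ = ∑ i ∈ A, k i + #T • K := by
        rw [sum_inter_add_sum_sdiff, ← add_nsmul, card_inter_add_card_sdiff]

theorem le_sum_sub_piecewise_const [AddCommGroup α] [PartialOrder α] [IsOrderedAddMonoid α]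
    (hK : ∀ i ∈ A, K ≤ k i) (hjA : j ∉ A → k j ≤ K) (hjS : j ∉ S)
    (hr : #S • r + #A • K = ∑ i ∈ A, k i + (#S + 1) • K) :
    k j ≤ ∑ i ∈ S, (r - A.piecewise k (fun _ ↦ K) i) := by
  set c := A.piecewise k fun _ ↦ K with hc
  have hkc : k j ≤ c j := by
    by_cases hj : j ∈ A
    · rw [hc, piecewise_eq_of_mem _ _ _ hj]
    · simpa only [hc, piecewise_eq_of_notMem _ _ _ hj] using hjA hj
  have hsum : c j + ∑ i ∈ S, c i ≤ #S • r := by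
    have h := sum_piecewise_const_add_card_nsmul_le hK (insert j S)
    rwa [sum_insert hjS, card_insert_of_notMem hjS, ← hr, add_le_add_iff_right] at h
  calc k j ≤ c j := hkc
    _ ≤ #S • r - ∑ i ∈ S, c i := le_sub_iff_add_le.2 hsum
    _ = ∑ i ∈ S, (r - c i) := by rw [sum_sub_distrib, sum_const]

end OrderedSums

theorem stmt_6_general {𝕜 : Type*} [Field 𝕜] [PartialOrder 𝕜] [IsStrictOrderedRing 𝕜]
    {N P Q j : ℕ} {k rt : ℕ → 𝕜} {rb : 𝕜} {𝒩 : Finset ℕ} (hP : P ≠ 0)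
    (hk : ∀ i, 1 ≤ i → i ≤ Q → k (Q + 1) ≤ k i)
    (hrb : rb = (∑ i ∈ Icc 1 Q, k i) / P + ((P : 𝕜) - Q + 1) / P * k (Q + 1))
    (hrt1 : ∀ i, 1 ≤ i → i ≤ Q → rt i = rb - k i)
    (hrt2 : ∀ i, Q < i → i ≤ N → rt i = rb - k (Q + 1))
    (hj : 1 ≤ j) (hkj : Q < j → k j ≤ k (Q + 1))
    (h𝒩 : 𝒩 ⊆ (Icc 1 N).erase j) (hcard : #𝒩 = P) :
    k j ≤ ∑ i ∈ 𝒩, rt i := by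
  have hrt : ∀ i ∈ 𝒩, rt i = rb - (Icc 1 Q).piecewise k (fun _ ↦ k (Q + 1)) i := by
    intro i hi
    obtain ⟨hi1, hiN⟩ := mem_Icc.1 (mem_of_mem_erase (h𝒩 hi))
    rcases le_or_gt i Q with hiQ | hQi
    · rw [hrt1 i hi1 hiQ, piecewise_eq_of_mem _ _ _ (mem_Icc.2 ⟨hi1, hiQ⟩)]
    · rw [hrt2 i hQi hiN, piecewise_eq_of_notMem _ _ _ fun h ↦ hQi.not_ge (mem_Icc.1 h).2]
  have hr : #𝒩 • rb + #(Icc 1 Q) • k (Q + 1) = ∑ i ∈ Icc 1 Q, k i + (#𝒩 + 1) • k (Q + 1) := by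
    have hP' : (P : 𝕜) ≠ 0 := Nat.cast_ne_zero.2 hP
    rw [hcard, hrb, Nat.card_Icc, Nat.add_sub_cancel]
    simp only [nsmul_eq_mul, Nat.cast_add, Nat.cast_one]
    field_simp
    ring
  rw [sum_congr rfl hrt]
  exact le_sum_sub_piecewise_const (fun i hi ↦ hk i (mem_Icc.1 hi).1 (mem_Icc.1 hi).2)
    (fun hjQ ↦ hkj (not_le.1 fun h ↦ hjQ (mem_Icc.2 ⟨hj, h⟩))) (fun h ↦ notMem_erase j _ (h𝒩 h)) hr

end

/-- Lemma 3 of the paper, feasibility for LP(9): with integers `M ≥ 0`,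
`Q ≥ 1`, `0 ≤ R ≤ M`, `N = (M+1)(Q+1) - R`, `P = N - M - 1`, reals
`k 1 ≥ k 2 ≥ … ≥ k (N-M)`, `r̃ = (1/P) ∑_{i=1}^{Q} k i + ((P-Q+1)/P) k (Q+1)`, and
`r̃ i = r̃ - k i` for `1 ≤ i ≤ Q`, `r̃ i = r̃ - k (Q+1)` for `Q < i ≤ N`, the vector
`(r̃ 1, …, r̃ N)` satisfies every constraint of LP(9): for every `j ∈ [N-M]` and every
`𝒩 ⊆ [N] \ {j}` with `|𝒩| = P` and `{1,…,j-1} ⊆ 𝒩`, one has `∑_{i ∈ 𝒩} r̃ i ≥ k j`. -/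
theorem stmt_6 (M Q R N P : ℕ) (hQ : 1 ≤ Q) (hR : R ≤ M)
    (hN : N + R = (M + 1) * (Q + 1)) (hP : P + (M + 1) = N)
    (k : ℕ → ℝ) (hk : ∀ i j, 1 ≤ i → i ≤ j → j ≤ N - M → k j ≤ k i)
    (rb : ℝ)
    (hrb : rb = (∑ i ∈ Finset.Icc 1 Q, k i) / P + ((P : ℝ) - Q + 1) / P * k (Q + 1))
    (rt : ℕ → ℝ) (hrt1 : ∀ i, 1 ≤ i → i ≤ Q → rt i = rb - k i)
    (hrt2 : ∀ i, Q < i → i ≤ N → rt i = rb - k (Q + 1)) :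
    ∀ j, 1 ≤ j → j ≤ N - M → ∀ 𝒩 : Finset ℕ,
      𝒩 ⊆ (Finset.Icc 1 N).erase j → 𝒩.card = P → Finset.Icc 1 (j - 1) ⊆ 𝒩 →
      k j ≤ ∑ i ∈ 𝒩, rt i := by
  intro j hj1 hj2 𝒩 h𝒩 hcard _
  have hQP : Q ≤ P := by nlinarith [Nat.mul_le_mul_left M hQ]
  exact stmt_6_general (by omega) (fun i hi hiQ ↦ hk i (Q + 1) hi (by omega) (by omega)) hrb hrt1
    hrt2 hj1 (fun hQj ↦ hk (Q + 1) j (by omega) hQj hj2) h𝒩 hcard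
end

section
/- Let integers $M\ge 0$, $Q\ge 1$, $0\le R\le M$, $N=(M+1)(Q+1)-R$, $P=N-M-1\ge 1$. Then there exists a family $\mathbb S$ of $N$ subsets of $[N]$ (counted with multiplicity), partitioned into sub-families $\mathbb S^{(1)},\dots,\mathbb S^{(Q+1)}$ with $|\mathbb S^{(j)}|=M+1$ for $1\le j\le Q$ and $|\mathbb S^{(Q+1)}|=M-R+1$, such that: (i) every $\mathcal N\in\mathbb S^{(j)}$ satisfies $|\mathcal N|=P$, $j\notin\mathcal N$ and $\{1,\dots,j-1\}\subseteq\mathcal N$; and (ii) every $i\in[N]$ belongs to exactly $P$ of the members of $\mathbb S$ (counted with multiplicity). -/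
/-!
Put `a = M + 1` and let the cells `0, …, Na - 1` be labelled in two ways: by their residue `t % N`
and by their block `t / a`. Each residue and each block occurs `a` times, and because `a ≤ N` a cell
is determined by its pair of labels. Hence the residue `s` meets exactly `a` blocks and a block
meets exactly `a` residues. Identify block `i` with the element `i + 1` of `{1, …, N}`. The `s`-th
member of the family is the complement of the set of blocks met by `s`; the smallest such block is
`s / a`, so this member belongs to the sub-family `s / a + 1`.
-/

open Finset

section BeattySet

variable {a n s i : ℕ}

/-- The set of all `⌊(s + k n) / a⌋ + 1` with `0 ≤ k < a`, an initial piece of an inhomogeneous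
Beatty sequence of slope `n / a`. The shift by one makes it a subset of `{1, …, n}`
when `s < n`. -/
def beattySet (a n s : ℕ) : Finset ℕ :=
  (range a).image fun k => (s + k * n) / a + 1

lemma mem_beattySet : i ∈ beattySet a n s ↔ ∃ k < a, (s + k * n) / a + 1 = i := by
  simp only [beattySet, mem_image, mem_range]

lemma strictMono_add_mul_div (ha : 0 < a) (han : a ≤ n) (s : ℕ) :
    StrictMono fun k => (s + k * n) / a := by
  refine strictMono_nat_of_lt_succ fun k => ?_
  calc (s + k * n) / a < (s + k * n + a) / a := by
        rw [Nat.add_div_right _ ha]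
        exact Nat.lt_succ_self _
    _ ≤ (s + (k + 1) * n) / a := Nat.div_le_div_right (by rw [add_one_mul]; omega)

lemma card_beattySet (ha : 0 < a) (han : a ≤ n) (s : ℕ) : #(beattySet a n s) = a := by
  rw [beattySet, card_image_of_injective, card_range]
  exact (add_left_injective 1).comp (strictMono_add_mul_div ha han s).injective

lemma beattySet_subset_Icc (hs : s < n) : beattySet a n s ⊆ Icc 1 n := by
  intro i hi
  obtain ⟨k, hk, rfl⟩ := mem_beattySet.mp hi
  have hlt : s + k * n < n * a :=
    calc s + k * n < (k + 1) * n := by rw [add_one_mul]; omega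
      _ ≤ n * a := by rw [mul_comm n]; exact Nat.mul_le_mul_right n hk
  exact mem_Icc.mpr ⟨Nat.le_add_left _ _, Nat.div_lt_of_lt_mul (mul_comm n a ▸ hlt)⟩

lemma isLeast_beattySet (ha : 0 < a) (n s : ℕ) :
    IsLeast (beattySet a n s : Set ℕ) (s / a + 1) := by
  refine ⟨mem_beattySet.mpr ⟨0, ha, by simp⟩, fun i hi => ?_⟩
  obtain ⟨k, -, rfl⟩ := mem_beattySet.mp hi
  exact Nat.succ_le_succ (Nat.div_le_div_right (Nat.le_add_right s _))

lemma succ_mem_beattySet_iff (hs : s < n) (hi : i < n) :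
    i + 1 ∈ beattySet a n s ↔ ∃ r < a, (i * a + r) % n = s := by
  rw [mem_beattySet]
  constructor
  · rintro ⟨k, hk, hki⟩
    have hdiv : (s + k * n) / a = i := Nat.succ_injective hki
    refine ⟨(s + k * n) % a, Nat.mod_lt _ (Nat.zero_lt_of_lt hk), ?_⟩
    rw [← hdiv, Nat.div_add_mod', Nat.add_mul_mod_self_right, Nat.mod_eq_of_lt hs]
  · rintro ⟨r, hr, rfl⟩
    have hlt : i * a + r < n * a :=
      calc i * a + r < (i + 1) * a := by rw [add_one_mul]; omega
        _ ≤ n * a := Nat.mul_le_mul_right a hi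
    refine ⟨(i * a + r) / n, Nat.div_lt_of_lt_mul hlt, ?_⟩
    rw [Nat.mod_add_div', mul_comm i, Nat.mul_add_div (Nat.zero_lt_of_lt hr),
      Nat.div_eq_of_lt hr, add_zero]

lemma injOn_add_mod (han : a ≤ n) (c : ℕ) : Set.InjOn (fun r => (c + r) % n) (range a) := by
  intro r hr r' hr' heq
  have hmod : r ≡ r' [MOD n] := Nat.ModEq.add_left_cancel' c heq
  exact hmod.eq_of_lt_of_lt ((mem_range.mp hr).trans_le han) ((mem_range.mp hr').trans_le han)

lemma card_filter_mem_beattySet (han : a ≤ n) (hi : i ∈ Icc 1 n) :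
    #{s ∈ range n | i ∈ beattySet a n s} = a := by
  obtain ⟨hi1, hin⟩ := mem_Icc.mp hi
  obtain ⟨i, rfl⟩ := Nat.exists_eq_add_of_le' hi1
  have himage : {s ∈ range n | i + 1 ∈ beattySet a n s} =
      (range a).image fun r => (i * a + r) % n := by
    ext s
    simp only [mem_filter, mem_image, mem_range]
    constructor
    · rintro ⟨hs, hmem⟩
      exact (succ_mem_beattySet_iff hs hin).mp hmem
    · intro hr
      have hs : s < n := by
        obtain ⟨r, -, rfl⟩ := hr
        exact Nat.mod_lt _ (Nat.zero_lt_of_lt hin)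
      exact ⟨hs, (succ_mem_beattySet_iff hs hin).mpr hr⟩
  rw [himage, card_image_of_injOn (injOn_add_mod han _), card_range]

end BeattySet

lemma sum_card_filter_map_fiberwise {ι κ α : Type*} [DecidableEq κ] {s : Finset ι} {t : Finset κ}
    {g : ι → κ} (hg : ∀ x ∈ s, g x ∈ t) (f : ι → α) (p : α → Prop) [DecidablePred p] :
    ∑ j ∈ t, Multiset.card (({x ∈ s | g x = j}.val.map f).filter p) = #{x ∈ s | p (f x)} := by
  rw [card_eq_sum_card_fiberwise (f := g) (t := t) fun x hx => hg x (mem_filter.mp hx).1]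
  refine sum_congr rfl fun j _ => ?_
  rw [Multiset.filter_map, Multiset.card_map, ← filter_val, card_val, filter_comm]
  rfl

section BeattyFamily

variable {a n i j : ℕ} {𝒩 : Finset ℕ}

/-- The `j`-th sub-family `𝕊⁽ʲ⁾` on the ground set `{1, …, n}`, where `a` stands for `M + 1`: the
complements of the sets `beattySet a n s` with `s < n` whose least element `s / a + 1` is `j`. -/
def beattyFamily (a n j : ℕ) : Multiset (Finset ℕ) :=
  {s ∈ range n | s / a + 1 = j}.val.map fun s => Icc 1 n \ beattySet a n s

lemma mem_beattyFamily :
    𝒩 ∈ beattyFamily a n j ↔ ∃ s < n, s / a + 1 = j ∧ Icc 1 n \ beattySet a n s = 𝒩 := by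
  simp only [beattyFamily, Multiset.mem_map, mem_val, mem_filter, mem_range, and_assoc]

lemma card_beattyFamily_succ (ha : 0 < a) (n j : ℕ) :
    Multiset.card (beattyFamily a n (j + 1)) = min n ((j + 1) * a) - j * a := by
  have hblock : {s ∈ range n | s / a + 1 = j + 1} = Ico (j * a) (min n ((j + 1) * a)) := by
    ext s
    rw [mem_filter, mem_range, mem_Ico, Nat.add_right_cancel_iff, Nat.div_eq_iff ha, add_one_mul]
    omega
  rw [beattyFamily, Multiset.card_map, card_val, hblock, Nat.card_Ico]

lemma subset_Icc_of_mem_beattyFamily (h𝒩 : 𝒩 ∈ beattyFamily a n j) : 𝒩 ⊆ Icc 1 n := by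
  obtain ⟨s, -, -, rfl⟩ := mem_beattyFamily.mp h𝒩
  exact sdiff_subset

lemma card_of_mem_beattyFamily (ha : 0 < a) (han : a ≤ n) (h𝒩 : 𝒩 ∈ beattyFamily a n j) :
    #𝒩 = n - a := by
  obtain ⟨s, hs, -, rfl⟩ := mem_beattyFamily.mp h𝒩
  rw [card_sdiff_of_subset (beattySet_subset_Icc hs), Nat.card_Icc, card_beattySet ha han,
    Nat.add_sub_cancel]

lemma notMem_of_mem_beattyFamily (ha : 0 < a) (h𝒩 : 𝒩 ∈ beattyFamily a n j) : j ∉ 𝒩 := by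
  obtain ⟨s, -, rfl, rfl⟩ := mem_beattyFamily.mp h𝒩
  exact fun h => (mem_sdiff.mp h).2 (isLeast_beattySet ha n s).1

lemma Icc_subset_of_mem_beattyFamily (ha : 0 < a) (h𝒩 : 𝒩 ∈ beattyFamily a n j) :
    Icc 1 (j - 1) ⊆ 𝒩 := by
  obtain ⟨s, hs, rfl, rfl⟩ := mem_beattyFamily.mp h𝒩
  intro i hi
  obtain ⟨hi1, hij⟩ := mem_Icc.mp hi
  have hin : i ≤ n := hij.trans ((Nat.div_le_self s a).trans hs.le)
  refine mem_sdiff.mpr ⟨mem_Icc.mpr ⟨hi1, hin⟩, fun hmem => ?_⟩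
  exact (Nat.lt_succ_of_le hij).not_ge ((isLeast_beattySet ha n s).2 hmem)

lemma sum_card_filter_mem_beattyFamily {m : ℕ} (han : a ≤ n) (hnm : n ≤ a * m)
    (hi : i ∈ Icc 1 n) :
    ∑ j ∈ Icc 1 m, Multiset.card ((beattyFamily a n j).filter (i ∈ ·)) = n - a := by
  have hindex : ∀ s ∈ range n, s / a + 1 ∈ Icc 1 m := fun s hs =>
    mem_Icc.mpr ⟨Nat.le_add_left _ _, Nat.div_lt_of_lt_mul ((mem_range.mp hs).trans_le hnm)⟩
  have hcompl : #{s ∈ range n | i ∈ beattySet a n s} + #{s ∈ range n | i ∉ beattySet a n s} = n :=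
    (card_filter_add_card_filter_not _).trans (card_range n)
  rw [card_filter_mem_beattySet han hi] at hcompl
  simp only [beattyFamily]
  rw [sum_card_filter_map_fiberwise hindex]
  simp only [mem_sdiff, hi, true_and]
  exact Nat.eq_sub_of_add_eq' hcompl

end BeattyFamily

/-- the set-system construction underlying the dual certificate in
Lemma 4 of the paper: for integers `M ≥ 0`, `Q ≥ 1`, `0 ≤ R ≤ M`,
`N = (M+1)(Q+1) - R`, `P = N - M - 1 ≥ 1`, there is a family `𝕊` of `N` subsets of
`[N]` (counted with multiplicity), partitioned into sub-families
`𝕊⁽¹⁾, …, 𝕊⁽Q+1⁾` with `|𝕊⁽ʲ⁾| = M+1` for `1 ≤ j ≤ Q` and `|𝕊⁽Q+1⁾| = M - R + 1`,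
such that every `𝒩 ∈ 𝕊⁽ʲ⁾` satisfies `𝒩 ⊆ [N]`, `|𝒩| = P`, `j ∉ 𝒩`,
`{1,…,j-1} ⊆ 𝒩`, and every `i ∈ [N]` belongs to exactly `P` members of `𝕊`
(counted with multiplicity). -/
theorem stmt_7 (M Q R N P : ℕ) (hQ : 1 ≤ Q) (hR : R ≤ M)
    (hN : N + R = (M + 1) * (Q + 1)) (hP : P + (M + 1) = N) (hP1 : 1 ≤ P) :
    ∃ S : ℕ → Multiset (Finset ℕ),
      (∀ j, 1 ≤ j → j ≤ Q → Multiset.card (S j) = M + 1) ∧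
      (Multiset.card (S (Q + 1)) + R = M + 1) ∧
      (∀ j, 1 ≤ j → j ≤ Q + 1 → ∀ 𝒩 ∈ S j,
        𝒩 ⊆ Finset.Icc 1 N ∧ 𝒩.card = P ∧ j ∉ 𝒩 ∧ Finset.Icc 1 (j - 1) ⊆ 𝒩) ∧
      (∀ i, 1 ≤ i → i ≤ N →
        (∑ j ∈ Finset.Icc 1 (Q + 1),
          Multiset.card ((S j).filter (fun 𝒩 => i ∈ 𝒩))) = P) := by
  have ha : 0 < M + 1 := M.succ_pos
  have haN : M + 1 ≤ N := hP ▸ Nat.le_add_left _ _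
  have hNP : N - (M + 1) = P := (Nat.eq_sub_of_add_eq hP).symm
  have hN' : N + R = Q * (M + 1) + (M + 1) := by rw [hN]; ring
  refine ⟨beattyFamily (M + 1) N, fun j hj hjQ => ?_, ?_, fun j _ _ 𝒩 h𝒩 => ⟨?_, ?_, ?_, ?_⟩,
    fun i hi hiN => ?_⟩
  · obtain ⟨j, rfl⟩ := Nat.exists_eq_add_of_le' hj
    have hjN : (j + 1) * (M + 1) ≤ N := (Nat.mul_le_mul_right _ hjQ).trans (by omega)
    rw [card_beattyFamily_succ ha, min_eq_right hjN, add_one_mul, Nat.add_sub_cancel_left]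
  · rw [card_beattyFamily_succ ha, add_one_mul]
    omega
  · exact subset_Icc_of_mem_beattyFamily h𝒩
  · exact (card_of_mem_beattyFamily ha haN h𝒩).trans hNP
  · exact notMem_of_mem_beattyFamily ha h𝒩
  · exact Icc_subset_of_mem_beattyFamily ha h𝒩
  · have hNQ : N ≤ (M + 1) * (Q + 1) := hN ▸ Nat.le_add_right _ _
    exact (sum_card_filter_mem_beattyFamily haN hNQ (mem_Icc.mpr ⟨hi, hiN⟩)).trans hNP
end

section
/- Let integers $M\ge 0$, $Q\ge 1$, $0\le R\le M$, $N=(M+1)(Q+1)-R$, $P=N-M-1\ge 1$, and let reals $k_1,\dots,k_{N-M}$ be given. If $(r_1,\dots,r_N)\in\mathbb R^N$ satisfies $\sum_{i\in\mathcal N} r_i\ge k_j$ for every $j\in[N-M]$ and every $\mathcal N\subseteq[N]\setminus\{j\}$ with $|\mathcal N|=P$ and $\{1,\dots,j-1\}\subseteq\mathcal N$, then $\sum_{i=1}^N r_i\ \ge\ \sum_{j=1}^{Q}\tfrac{M+1}{P}\,k_j+\tfrac{M-R+1}{P}\,k_{Q+1}$. -/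
/-!
Write `S` for the total of `r`, put `q = Q + 1` and `U = {Q + 2, …, N}`. Complementing `𝒩`, the
constraints for `j ≤ q` say that `k j + r j + ∑ i ∈ C, r i ≤ S` for every set `C` of `M` indices
larger than `j`. Averaging over `C` replaces the indices in `U` by their mean `μ`. For `j ≤ Q`, let
`C` contain `q` with weight `t = R / ((M + 1) Q)`; for `j = q`, take `C ⊆ U`. Adding these
inequalities with multiplicity `M + 1` for each `j ≤ Q` and `M + 1 - R` for `j = q`, every `r i`
occurs on the left `M + 1` times on average, and `N` copies of `S` stand on the right.
Since `N - (M + 1) = P`, this is the claim multiplied by `P`.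
-/

section

open Finset
open scoped BigOperators

variable {ι : Type*}

theorem exists_subset_card_eq_nsmul_le_sum {G : Type*} [AddCommGroup G] [LinearOrder G]
    [IsOrderedAddMonoid G] {s : Finset ι} {f : ι → G} {a : G} {n : ℕ}
    (ha : #s • a ≤ ∑ i ∈ s, f i) (hn : n ≤ #s) :
    ∃ t ⊆ s, #t = n ∧ n • a ≤ ∑ i ∈ t, f i := by
  classical
  induction hn using Nat.decreasingInduction with
  | self => exact ⟨s, Subset.rfl, rfl, ha⟩
  | of_succ n _ ih =>
    obtain ⟨t, hts, ht_card, ht_sum⟩ := ih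
    by_cases h_small : ∃ i ∈ t, f i ≤ a
    · obtain ⟨i, hi, hia⟩ := h_small
      refine ⟨t.erase i, (erase_subset i t).trans hts, ?_, ?_⟩
      · rw [card_erase_of_mem hi, ht_card, Nat.add_sub_cancel]
      · rw [succ_nsmul, ← sum_erase_add t f hi] at ht_sum
        exact le_of_add_le_add_right (ht_sum.trans (by gcongr))
    · push Not at h_small
      obtain ⟨u, hut, hu_card⟩ := exists_subset_card_eq (n.le_succ.trans_eq ht_card.symm)
      refine ⟨u, hut.trans hts, hu_card, ?_⟩
      rw [← hu_card]
      exact card_nsmul_le_sum u f a fun i hi ↦ (h_small i (hut hi)).le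

theorem add_sum_le_sum_Icc_of_forall_le_sum {G : Type*} [AddCommMonoid G] [PartialOrder G]
    [IsOrderedAddMonoid G] {M N P j : ℕ} (hj : 1 ≤ j) (hjN : j ≤ N) (hP : P + (M + 1) = N)
    {r : ℕ → G} {a : G} (ha : ∀ 𝒩 : Finset ℕ, 𝒩 ⊆ (Icc 1 N).erase j → #𝒩 = P →
      Icc 1 (j - 1) ⊆ 𝒩 → a ≤ ∑ i ∈ 𝒩, r i)
    {C : Finset ℕ} (hC : C ⊆ Icc (j + 1) N) (hC_card : #C = M) :
    a + r j + ∑ i ∈ C, r i ≤ ∑ i ∈ Icc 1 N, r i := by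
  have h_bounds : ∀ i ∈ C, j + 1 ≤ i ∧ i ≤ N := fun i hi ↦ mem_Icc.1 (hC hi)
  have hjC : j ∉ C := by grind
  have h_sub : insert j C ⊆ Icc 1 N := by grind
  have h_compl_card : #(Icc 1 N \ insert j C) = P := by
    rw [card_sdiff_of_subset h_sub, card_insert_of_notMem hjC, hC_card, Nat.card_Icc]
    lia
  rw [← sum_sdiff h_sub, sum_insert hjC, add_assoc]
  gcongr
  exact ha _ (by grind) h_compl_card (by grind)

variable {K : Type*} [Field K] [LinearOrder K] [IsStrictOrderedRing K]

theorem mul_expect_le_of_forall_sum_le {s : Finset ι} {f : ι → K} {c : K} {n : ℕ} (hn : n ≤ #s)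
    (h : ∀ t ⊆ s, #t = n → ∑ i ∈ t, f i ≤ c) : n * 𝔼 i ∈ s, f i ≤ c := by
  obtain ⟨t, hts, ht_card, ht_sum⟩ :=
    exists_subset_card_eq_nsmul_le_sum (card_smul_expect s f).le hn
  rw [nsmul_eq_mul] at ht_sum
  exact ht_sum.trans (h t hts ht_card)

variable [DecidableEq ι]

/-- The left-hand side is the mean of `∑ i ∈ C, f i` over a random `m`-subset `C` that contains `q`
with probability `t` and is otherwise uniform. -/
theorem mul_expect_add_mul_sub_expect_le {U : Finset ι} {q : ι} (hq : q ∉ U) {f : ι → K} {c t : K}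
    {m : ℕ} (hm : m ≤ #U) (h : ∀ C ⊆ insert q U, #C = m → ∑ i ∈ C, f i ≤ c)
    (ht₀ : 0 ≤ t) (ht₁ : t ≤ 1) (htm : t ≤ m) :
    m * 𝔼 i ∈ U, f i + t * (f q - 𝔼 i ∈ U, f i) ≤ c := by
  have h_without : m * 𝔼 i ∈ U, f i ≤ c :=
    mul_expect_le_of_forall_sum_le hm fun C hC ↦ h C (hC.trans (subset_insert q U))
  cases m with
  | zero =>
    obtain rfl : t = 0 := le_antisymm (by simpa using htm) ht₀
    simpa using h_without
  | succ m =>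
    have h_with : m * 𝔼 i ∈ U, f i ≤ c - f q := by
      refine mul_expect_le_of_forall_sum_le (by lia) fun C hC hC_card ↦ ?_
      have hqC : q ∉ C := fun hqC ↦ hq (hC hqC)
      have h_insert := h (insert q C) (insert_subset_insert q hC)
        (by rw [card_insert_of_notMem hqC, hC_card])
      rwa [sum_insert hqC, ← le_sub_iff_add_le'] at h_insert
    push_cast at h_without ⊢
    linear_combination (1 - t) * h_without + t * h_with

theorem mul_sum_add_mul_le_mul_of_forall_add_sum_le {J U : Finset ι} {q : ι} (hq : q ∉ U)
    {M R : ℕ} (hR : R ≤ M) (hJ : J.Nonempty) (hU : #U + R = M * (#J + 1)) {k r : ι → K} {S : K}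
    (hS : ∑ j ∈ J, r j + r q + ∑ i ∈ U, r i = S)
    (hkJ : ∀ j ∈ J, ∀ C ⊆ insert q U, #C = M → k j + r j + ∑ i ∈ C, r i ≤ S)
    (hkq : ∀ C ⊆ U, #C = M → k q + r q + ∑ i ∈ C, r i ≤ S) :
    (M + 1) * ∑ j ∈ J, k j + (M - R + 1) * k q ≤ ((M + 1) * #J - R) * S := by
  have hMU : M ≤ #U := by nlinarith [hJ.card_pos]
  have hJ₁ : (1 : K) ≤ #J := by exact_mod_cast hJ.card_pos
  have hRM : (R : K) ≤ M := by exact_mod_cast hR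
  have hU_cast : (#U : K) + R = M * (#J + 1) := by exact_mod_cast hU
  obtain ⟨t, ht₀, ht₁, htM, htR⟩ :
      ∃ t : K, 0 ≤ t ∧ t ≤ 1 ∧ t ≤ M ∧ (M + 1) * #J * t = R := by
    have h_denom : (1 : K) ≤ (M + 1) * #J := one_le_mul_of_one_le_of_one_le (by simp) hJ₁
    have h_pos := one_pos.trans_le h_denom
    refine ⟨R / ((M + 1) * #J), by positivity, (div_le_one₀ h_pos).2 ?_,
      (div_le_self (by simp) h_denom).trans hRM, mul_div_cancel₀ _ h_pos.ne'⟩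
    nlinarith
  set μ := 𝔼 i ∈ U, r i
  have hUμ : #U * μ = ∑ i ∈ U, r i := card_mul_expect U r
  have h_each : ∀ j ∈ J, k j + r j ≤ S - (M * μ + t * (r q - μ)) := fun j hj ↦
    le_sub_comm.1 <| mul_expect_add_mul_sub_expect_le hq hMU
      (fun C hC hC_card ↦ le_sub_iff_add_le'.2 (hkJ j hj C hC hC_card)) ht₀ ht₁ htM
  have h_sum : ∑ j ∈ J, k j + ∑ j ∈ J, r j ≤ #J * (S - (M * μ + t * (r q - μ))) := by
    simpa only [sum_add_distrib, nsmul_eq_mul] using sum_le_card_nsmul J _ _ h_each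
  have h_q : k q + r q ≤ S - M * μ :=
    le_sub_comm.1 <| mul_expect_le_of_forall_sum_le hMU
      fun C hC hC_card ↦ le_sub_iff_add_le'.2 (hkq C hC hC_card)
  have h_q_scaled := mul_le_mul_of_nonneg_left h_q (by linarith : (0 : K) ≤ M - R + 1)
  linear_combination (M + 1) * h_sum + h_q_scaled - (M + 1) * hS - (M + 1) * hUμ
    + (M + 1) * μ * hU_cast - (r q - μ) * htR

theorem mul_sum_add_mul_le_mul_sum_Icc {M Q R N P : ℕ} (hQ : 1 ≤ Q) (hR : R ≤ M)
    (hN : N + R = (M + 1) * (Q + 1)) (hP : P + (M + 1) = N) {k r : ℕ → K}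
    (hfeas : ∀ j, 1 ≤ j → j ≤ Q + 1 → ∀ 𝒩 : Finset ℕ,
      𝒩 ⊆ (Icc 1 N).erase j → #𝒩 = P → Icc 1 (j - 1) ⊆ 𝒩 → k j ≤ ∑ i ∈ 𝒩, r i) :
    (M + 1) * ∑ j ∈ Icc 1 Q, k j + (M - R + 1) * k (Q + 1) ≤ P * ∑ i ∈ Icc 1 N, r i := by
  have hQN : Q + 1 ≤ N := by nlinarith
  have h_compl : ∀ j, 1 ≤ j → j ≤ Q + 1 → ∀ C ⊆ Icc (j + 1) N, #C = M →
      k j + r j + ∑ i ∈ C, r i ≤ ∑ i ∈ Icc 1 N, r i := fun j hj hjQ _ hC hC_card ↦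
    add_sum_le_sum_Icc_of_forall_le_sum hj (hjQ.trans hQN) hP (hfeas j hj hjQ) hC hC_card
  have h_total : ∑ j ∈ Icc 1 Q, r j + r (Q + 1) + ∑ i ∈ Icc (Q + 1 + 1) N, r i
      = ∑ i ∈ Icc 1 N, r i := by
    rw [← sum_Icc_succ_top (by lia), Icc_add_one_left_eq_Ioc]
    exact sum_Ioc_consecutive r (Nat.zero_le _) hQN
  have h_card : #(Icc (Q + 1 + 1) N) + R = M * (#(Icc 1 Q) + 1) := by
    rw [Nat.card_Icc, Nat.card_Icc]
    grind
  have hP_eq : (P : K) = (M + 1) * #(Icc 1 Q) - R := by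
    rw [Nat.card_Icc, Nat.add_sub_cancel, eq_sub_iff_add_eq]
    exact_mod_cast (by lia : P + R = (M + 1) * Q)
  rw [hP_eq]
  refine mul_sum_add_mul_le_mul_of_forall_add_sum_le (by simp) hR (nonempty_Icc.2 hQ) h_card
    h_total ?_ (h_compl (Q + 1) (by lia) le_rfl)
  intro j hj C hC
  rw [insert_Icc_add_one_left_eq_Icc hQN] at hC
  obtain ⟨hj₁, hjQ⟩ := mem_Icc.1 hj
  exact h_compl j hj₁ (by lia) C (hC.trans (Icc_subset_Icc_left (by lia)))

theorem stmt_8_general (M Q R N P : ℕ) (hQ : 1 ≤ Q) (hR : R ≤ M)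
    (hN : N + R = (M + 1) * (Q + 1)) (hP : P + (M + 1) = N) (k r : ℕ → K)
    (hfeas : ∀ j, 1 ≤ j → j ≤ Q + 1 → ∀ 𝒩 : Finset ℕ,
      𝒩 ⊆ (Icc 1 N).erase j → #𝒩 = P → Icc 1 (j - 1) ⊆ 𝒩 → k j ≤ ∑ i ∈ 𝒩, r i) :
    (∑ j ∈ Icc 1 Q, ((M : K) + 1) / P * k j) + ((M : K) - R + 1) / P * k (Q + 1)
      ≤ ∑ i ∈ Icc 1 N, r i := by
  have hP_pos : (0 : K) < P := Nat.cast_pos.2 (by nlinarith)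
  rw [← mul_sum, div_mul_eq_mul_div, div_mul_eq_mul_div, ← add_div, div_le_iff₀' hP_pos]
  exact mul_sum_add_mul_le_mul_sum_Icc hQ hR hN hP hfeas

end

/-- the dual lower bound in Lemma 4 of the paper: for integers `M ≥ 0`,
`Q ≥ 1`, `0 ≤ R ≤ M`, `N = (M+1)(Q+1) - R`, `P = N - M - 1 ≥ 1`, and reals
`k 1, …, k (N-M)`: if `(r 1, …, r N)` satisfies `∑_{i ∈ 𝒩} r i ≥ k j` for every
`j ∈ [N-M]` and every `𝒩 ⊆ [N] \ {j}` with `|𝒩| = P` and `{1,…,j-1} ⊆ 𝒩`, then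
`∑_{i=1}^{N} r i ≥ ∑_{j=1}^{Q} ((M+1)/P) k j + ((M-R+1)/P) k (Q+1)`. -/
theorem stmt_8 (M Q R N P : ℕ) (hQ : 1 ≤ Q) (hR : R ≤ M)
    (hN : N + R = (M + 1) * (Q + 1)) (hP : P + (M + 1) = N) (hP1 : 1 ≤ P)
    (k : ℕ → ℝ) (r : ℕ → ℝ)
    (hfeas : ∀ j, 1 ≤ j → j ≤ N - M → ∀ 𝒩 : Finset ℕ,
      𝒩 ⊆ (Finset.Icc 1 N).erase j → 𝒩.card = P → Finset.Icc 1 (j - 1) ⊆ 𝒩 →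
      k j ≤ ∑ i ∈ 𝒩, r i) :
    (∑ j ∈ Finset.Icc 1 Q, ((M : ℝ) + 1) / P * k j) + ((M : ℝ) - R + 1) / P * k (Q + 1)
      ≤ ∑ i ∈ Finset.Icc 1 N, r i := by
  have hQN : Q + 1 ≤ N - M := Nat.le_sub_of_add_le (by nlinarith)
  exact stmt_8_general M Q R N P hQ hR hN hP k r fun j hj hjQ ↦ hfeas j hj (hjQ.trans hQN)
end

section
/- Let integers $M\ge 0$, $Q\ge 1$, $0\le R\le M$, $N=(M+1)(Q+1)-R$, $P=N-M-1\ge 1$, and let reals $k_1\ge k_2\ge\dots\ge k_{N-M}$ be given. Define $\tilde r=\tfrac1P\sum_{i=1}^{Q}k_i+\tfrac{P-Q+1}{P}k_{Q+1}$ and $\tilde r_i=\tilde r-k_i$ for $1\le i\le Q$, $\tilde r_i=\tilde r-k_{Q+1}$ for $Q<i\le N$. Then $(\tilde r_1,\dots,\tilde r_N)$ is an optimal solution of LP(9): it satisfies all the constraints of LP(9), its value satisfies $\sum_{i=1}^{N}\tilde r_i=\sum_{i=1}^{Q}\tfrac{N-P}{P}k_i+\tfrac{N+Q(P-N)}{P}k_{Q+1}$,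 and every $(r_1,\dots,r_N)$ satisfying the constraints of LP(9) has $\sum_{i=1}^N r_i\ge\sum_{i=1}^N\tilde r_i$. -/
/-!
Passing to the complement `C` of `𝒩`, the constraints of LP(9) say that
`k j + ∑ i ∈ C, r i ≤ ∑ i, r i` whenever `C` has `M + 1` elements, the least of which is `j`.

The candidate is feasible because `r̃ i = a - e i`, where `e i` is the excess of `k i` over
`k (Q + 1)` for `i ≤ Q` and `e i = 0` for `i > Q`, and where `P * a = k (Q + 1) + ∑ i, e i`: a sum
of `P` of the `r̃ i` omitting `r̃ j` is at least `k (Q + 1) + e j`, hence at least `k j`.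

It is optimal by a fractional exact cover of the indices. Give weight `M + 1 - R` to the constraint
of one set `C ⊆ U = {Q + 1, …, N}` with `Q + 1 ∈ C`, and weight `M + 1` to each `j ≤ Q`. Spreading
what remains to be covered of `U` evenly over the `j ≤ Q` assigns to each of them coefficients in
`[0, 1]` on `U` of total `M`, and these can be replaced by an `M`-element subset of `U` on which
`r` has at least the same weighted sum.
-/

open Finset

section Weights

variable {ι : Type*}

lemma exists_subset_card_eq_and_threshold {α : Type*} [LinearOrder α] [Nonempty α]
    (s : Finset ι) (f : ι → α) {m : ℕ} (hm : m ≤ #s) :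
    ∃ t ⊆ s, #t = m ∧ ∃ c, (∀ i ∈ t, c ≤ f i) ∧ ∀ i ∈ s, i ∉ t → f i ≤ c := by
  classical
  induction m with
  | zero =>
    obtain ⟨c, hc⟩ := (s.image f).exists_le
    exact ⟨∅, empty_subset s, card_empty, c, by simp,
      fun i hi _ => hc _ (mem_image_of_mem f hi)⟩
  | succ m ih =>
    obtain ⟨t, hts, htm, c, hct, hcs⟩ := ih (by omega)
    have hne : (s \ t).Nonempty := sdiff_nonempty.2 fun h => by
      have := card_le_card h
      omega
    obtain ⟨a, ha, hmax⟩ := (s \ t).exists_max_image f hne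
    obtain ⟨has, hat⟩ := mem_sdiff.1 ha
    refine ⟨insert a t, insert_subset has hts, by rw [card_insert_of_notMem hat, htm], f a,
      (forall_mem_insert _ _ _).2 ⟨le_rfl, fun i hi => (hcs a has hat).trans (hct i hi)⟩, ?_⟩
    intro i his hi
    exact hmax i (mem_sdiff.2 ⟨his, fun h => hi (mem_insert_of_mem h)⟩)

variable {𝕜 : Type*} [CommRing 𝕜] [LinearOrder 𝕜] [IsStrictOrderedRing 𝕜]

lemma exists_subset_card_eq_and_sum_mul_le_mul_sum {s : Finset ι} {w : ι → 𝕜} {d : 𝕜} {m : ℕ}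
    (hd : 0 < d) (hw0 : ∀ i ∈ s, 0 ≤ w i) (hwd : ∀ i ∈ s, w i ≤ d) (hwm : ∑ i ∈ s, w i = m * d)
    (f : ι → 𝕜) : ∃ t ⊆ s, #t = m ∧ ∑ i ∈ s, w i * f i ≤ d * ∑ i ∈ t, f i := by
  classical
  have hm : m ≤ #s := by
    have h : (m : 𝕜) * d ≤ #s * d := by simpa [hwm] using sum_le_sum hwd
    exact_mod_cast le_of_mul_le_mul_right h hd
  obtain ⟨t, hts, htm, c, hct, hcs⟩ := exists_subset_card_eq_and_threshold s f hm
  refine ⟨t, hts, htm, ?_⟩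
  have hcentred : ∑ i ∈ s, w i * (f i - c) ≤ ∑ i ∈ t, d * (f i - c) :=
    calc
      _ ≤ ∑ i ∈ s, if i ∈ t then d * (f i - c) else 0 := by
        refine sum_le_sum fun i hi => ?_
        split_ifs with hit
        · exact mul_le_mul_of_nonneg_right (hwd i hi) (sub_nonneg.2 (hct i hit))
        · exact mul_nonpos_of_nonneg_of_nonpos (hw0 i hi) (sub_nonpos.2 (hcs i hi hit))
      _ = _ := by rw [sum_ite_mem, inter_eq_right.2 hts]
  simpa only [mul_sub, sum_sub_distrib, ← sum_mul, ← mul_sum, hwm, sum_const, htm, nsmul_eq_mul,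
    mul_assoc, mul_left_comm d, sub_le_sub_iff_right] using hcentred

/- The weight of `i ∈ U` is what is left of its multiplicity `M + 1` after using `C` with
multiplicity `M + 1 - R`, to be shared among `Q` subsets taken with multiplicity `M + 1`. -/
lemma exists_subset_card_eq_and_mul_sum_le {U C : Finset ι} {M Q R : ℕ} (hCU : C ⊆ U)
    (hC : #C = M + 1) (hU : #U + R = M * Q + (M + 1)) (hQ : 1 ≤ Q) (f : ι → 𝕜) :
    ∃ B ⊆ U, #B = M ∧ ((M : 𝕜) + 1) * ∑ i ∈ U, f i ≤
      ((M : 𝕜) + 1 - R) * ∑ i ∈ C, f i + ((M : 𝕜) + 1) * Q * ∑ i ∈ B, f i := by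
  classical
  have hM0 : (0 : 𝕜) ≤ M := Nat.cast_nonneg M
  have hR0 : (0 : 𝕜) ≤ R := Nat.cast_nonneg R
  have hRMQ : (R : 𝕜) ≤ M * Q := by
    have := card_le_card hCU
    exact_mod_cast (by omega : R ≤ M * Q)
  have hQ1 : (1 : 𝕜) ≤ Q := by exact_mod_cast hQ
  have hMQ : (M : 𝕜) + 1 ≤ (M + 1) * Q :=
    le_mul_of_one_le_right (by positivity) hQ1
  let w (i : ι) : 𝕜 := M + 1 - if i ∈ C then (M + 1 - R : 𝕜) else 0
  have hw0 (i : ι) : 0 ≤ w i := by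
    simp only [w]
    split_ifs <;> linarith [hM0, hR0]
  have hwd (i : ι) : w i ≤ (M + 1) * Q := by
    simp only [w]
    split_ifs <;> linarith [hMQ, hRMQ, hQ1]
  have hwg (g : ι → 𝕜) :
      ∑ i ∈ U, w i * g i = (M + 1) * ∑ i ∈ U, g i - (M + 1 - R) * ∑ i ∈ C, g i :=
    calc
      _ = ∑ i ∈ U, ((M + 1) * g i - if i ∈ C then (M + 1 - R) * g i else 0) := by
        simp only [w, sub_mul ((M : 𝕜) + 1), ite_mul, zero_mul]
      _ = _ := by rw [sum_sub_distrib, sum_ite_mem, inter_eq_right.2 hCU, mul_sum, mul_sum]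
  have hwM : ∑ i ∈ U, w i = M * ((M + 1) * Q) := by
    have hUR : (#U : 𝕜) + R = M * Q + (M + 1) := by exact_mod_cast hU
    have hcount := hwg 1
    simp only [Pi.one_apply, mul_one, sum_const, nsmul_eq_mul, hC] at hcount
    rw [hcount, eq_sub_of_add_eq hUR]
    push_cast
    ring
  obtain ⟨B, hBU, hBM, hB⟩ := exists_subset_card_eq_and_sum_mul_le_mul_sum (by linarith)
    (fun i _ => hw0 i) (fun i _ => hwd i) hwM f
  exact ⟨B, hBU, hBM, sub_le_iff_le_add'.1 ((hwg f).symm.trans_le hB)⟩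

end Weights

lemma sum_Icc_one_add_sum_Ioc {α : Type*} [AddCommMonoid α] {Q N : ℕ} (hQN : Q ≤ N)
    (f : ℕ → α) : ∑ i ∈ Icc 1 Q, f i + ∑ i ∈ Ioc Q N, f i = ∑ i ∈ Icc 1 N, f i := by
  simpa only [← Icc_add_one_left_eq_Ioc 0, zero_add] using
    sum_Ioc_consecutive f (Nat.zero_le Q) hQN

section LinearProgram

variable {𝕜 : Type*} {M Q R N P : ℕ}

/-- The amount by which `k i` exceeds the pivot value `k (Q + 1)`, with indices beyond `Q` given
excess `0`. It measures how far `r̃ i` lies below the common value of `r̃ (Q + 1), …, r̃ N`. -/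
def excess [Ring 𝕜] (k : ℕ → 𝕜) (Q i : ℕ) : 𝕜 :=
  if i ≤ Q then k i - k (Q + 1) else 0

lemma sum_Icc_excess [Ring 𝕜] (k : ℕ → 𝕜) (Q : ℕ) :
    ∑ i ∈ Icc 1 Q, excess k Q i = ∑ i ∈ Icc 1 Q, k i - Q * k (Q + 1) := by
  unfold excess
  rw [sum_congr rfl fun i hi => if_pos (mem_Icc.1 hi).2]
  simp

lemma sum_eq_of_eq_sub_excess [Ring 𝕜] {k r : ℕ → 𝕜} {a : 𝕜} (hQN : Q ≤ N)
    (hr : ∀ i ∈ Icc 1 N, r i = a - excess k Q i) :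
    ∑ i ∈ Icc 1 N, r i = N * a - ∑ i ∈ Icc 1 Q, excess k Q i := by
  have htail : ∑ i ∈ Ioc Q N, excess k Q i = 0 :=
    sum_eq_zero fun i hi => if_neg (mem_Ioc.1 hi).1.not_ge
  rw [sum_congr rfl hr, sum_sub_distrib, ← sum_Icc_one_add_sum_Ioc hQN (excess k Q), htail]
  simp

lemma mul_sub_pivot_eq_add_sum_excess [Field 𝕜] (hP : (P : 𝕜) ≠ 0) (k : ℕ → 𝕜) (Q : ℕ) :
    P * ((∑ i ∈ Icc 1 Q, k i) / P + ((P : 𝕜) - Q + 1) / P * k (Q + 1) - k (Q + 1)) =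
      k (Q + 1) + ∑ i ∈ Icc 1 Q, excess k Q i := by
  rw [sum_Icc_excess]
  field_simp
  ring

lemma sum_eq_of_mul_eq_add_sum_excess [Field 𝕜] {k r : ℕ → 𝕜} {a : 𝕜} (hP : (P : 𝕜) ≠ 0)
    (hQN : Q ≤ N) (hr : ∀ i ∈ Icc 1 N, r i = a - excess k Q i)
    (ha : P * a = k (Q + 1) + ∑ i ∈ Icc 1 Q, excess k Q i) :
    ∑ i ∈ Icc 1 N, r i = (∑ i ∈ Icc 1 Q, ((N : 𝕜) - P) / P * k i)
      + ((N : 𝕜) + Q * ((P : 𝕜) - N)) / P * k (Q + 1) := by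
  rw [sum_eq_of_eq_sub_excess hQN hr, eq_div_of_mul_eq hP ((mul_comm _ _).trans ha),
    sum_Icc_excess, ← mul_sum]
  field_simp
  ring

/-- The constraints of LP(9) on `r 1, …, r N`; its objective is `∑ i ∈ Icc 1 N, r i`. The parameter
`P` stands for `N - M - 1`. -/
def IsFeasible [AddCommMonoid 𝕜] [LE 𝕜] (N M P : ℕ) (k r : ℕ → 𝕜) : Prop :=
  ∀ j, 1 ≤ j → j ≤ N - M → ∀ 𝒩 : Finset ℕ,
    𝒩 ⊆ (Icc 1 N).erase j → #𝒩 = P → Icc 1 (j - 1) ⊆ 𝒩 → k j ≤ ∑ i ∈ 𝒩, r i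

section Ordered

variable [CommRing 𝕜] [LinearOrder 𝕜] [IsStrictOrderedRing 𝕜] {k r : ℕ → 𝕜}

lemma sum_excess_le_sum_Icc (hk : ∀ i, 1 ≤ i → i ≤ Q → k (Q + 1) ≤ k i) {S : Finset ℕ}
    (hS : ∀ i ∈ S, 1 ≤ i) : ∑ i ∈ S, excess k Q i ≤ ∑ i ∈ Icc 1 Q, excess k Q i := by
  have hpos : ∀ i, 1 ≤ i → 0 ≤ excess k Q i := fun i hi => by
    unfold excess
    split_ifs with hiQ
    exacts [sub_nonneg.2 (hk i hi hiQ), le_rfl]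
  calc
    _ ≤ ∑ i ∈ S ∪ Icc 1 Q, excess k Q i :=
      sum_le_sum_of_subset_of_nonneg subset_union_left fun i hi _ =>
        hpos i ((mem_union.1 hi).elim (hS i) fun h => (mem_Icc.1 h).1)
    _ = ∑ i ∈ Icc 1 Q, excess k Q i := by
      refine (sum_subset subset_union_right fun i hi hiQ => if_neg fun h => hiQ ?_).symm
      exact (mem_union.1 hi).elim (fun hiS => mem_Icc.2 ⟨hS i hiS, h⟩) id

lemma isFeasible_of_eq_sub_excess {a : 𝕜} (hr : ∀ i ∈ Icc 1 N, r i = a - excess k Q i)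
    (ha : P * a = k (Q + 1) + ∑ i ∈ Icc 1 Q, excess k Q i)
    (hk_le : ∀ i, 1 ≤ i → i ≤ Q → k (Q + 1) ≤ k i)
    (hk_gt : ∀ j, Q < j → j ≤ N - M → k j ≤ k (Q + 1)) :
    IsFeasible N M P k r := by
  intro j hj1 hjN S hS hSP _
  have hjS : j ∉ S := fun h => notMem_erase j _ (hS h)
  have hSN : S ⊆ Icc 1 N := hS.trans (erase_subset _ _)
  have hkj : k j ≤ k (Q + 1) + excess k Q j := by
    unfold excess
    split_ifs with hjQ
    · rw [add_sub_cancel]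
    · rw [add_zero]
      exact hk_gt j (by omega) hjN
  have hexcess := sum_excess_le_sum_Icc (S := insert j S) hk_le
    ((forall_mem_insert _ _ _).2 ⟨hj1, fun i hi => (mem_Icc.1 (hSN hi)).1⟩)
  rw [sum_insert hjS] at hexcess
  calc
    k j ≤ P * a - ∑ i ∈ S, excess k Q i := by linarith
    _ = ∑ i ∈ S, r i := by
      rw [sum_congr rfl fun i hi => hr i (hSN hi), sum_sub_distrib, sum_const, hSP, nsmul_eq_mul]

lemma IsFeasible.add_sum_le_sum (h : IsFeasible N M P k r) (hP : P + (M + 1) = N) {j : ℕ}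
    (hj : 1 ≤ j) {C : Finset ℕ} (hjC : j ∈ C) (hCN : C ⊆ Icc j N) (hC : #C = M + 1) :
    k j + ∑ i ∈ C, r i ≤ ∑ i ∈ Icc 1 N, r i := by
  have hC1 : C ⊆ Icc 1 N := hCN.trans (Icc_subset_Icc_left hj)
  have hjN : j ≤ N - M := by
    have := card_le_card hCN
    rw [hC, Nat.card_Icc] at this
    omega
  have hcompl : k j ≤ ∑ i ∈ Icc 1 N \ C, r i := by
    refine h j hj hjN _ ?_ ?_ ?_
    · exact subset_erase.2 ⟨sdiff_subset, fun hj' => (mem_sdiff.1 hj').2 hjC⟩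
    · rw [card_sdiff_of_subset hC1, hC, Nat.card_Icc]
      omega
    · intro i hi
      obtain ⟨hi1, hij⟩ := mem_Icc.1 hi
      refine mem_sdiff.2 ⟨mem_Icc.2 ⟨hi1, by omega⟩, fun hiC => ?_⟩
      have := (mem_Icc.1 (hCN hiC)).1
      omega
  calc
    _ ≤ ∑ i ∈ Icc 1 N \ C, r i + ∑ i ∈ C, r i := by gcongr
    _ = _ := sum_sdiff hC1

lemma IsFeasible.sum_add_sum_add_mul_sum_le (h : IsFeasible N M P k r) (hP : P + (M + 1) = N)
    (hQN : Q ≤ N) {B : Finset ℕ} (hBN : B ⊆ Ioc Q N) (hB : #B = M) :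
    ∑ j ∈ Icc 1 Q, k j + ∑ j ∈ Icc 1 Q, r j + Q * ∑ i ∈ B, r i ≤ Q * ∑ i ∈ Icc 1 N, r i := by
  have hconstraint : ∀ j ∈ Icc 1 Q, k j + r j + ∑ i ∈ B, r i ≤ ∑ i ∈ Icc 1 N, r i := by
    intro j hj
    obtain ⟨hj1, hjQ⟩ := mem_Icc.1 hj
    have hjB : j ∉ B := fun hjB => hjQ.not_gt (mem_Ioc.1 (hBN hjB)).1
    have hBj : B ⊆ Icc j N := hBN.trans fun i hi =>
      mem_Icc.2 ⟨hjQ.trans (mem_Ioc.1 hi).1.le, (mem_Ioc.1 hi).2⟩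
    rw [add_assoc, ← sum_insert hjB]
    exact h.add_sum_le_sum hP hj1 (mem_insert_self j B)
      (insert_subset (mem_Icc.2 ⟨le_rfl, hjQ.trans hQN⟩) hBj)
      (by rw [card_insert_of_notMem hjB, hB])
  simpa [sum_add_distrib] using sum_le_sum hconstraint

lemma IsFeasible.le_mul_sum (h : IsFeasible N M P k r) (hQ : 1 ≤ Q) (hR : R ≤ M)
    (hN : N + R = (M + 1) * (Q + 1)) (hP : P + (M + 1) = N) :
    ((M : 𝕜) + 1) * ∑ i ∈ Icc 1 Q, k i + ((M : 𝕜) + 1 - R) * k (Q + 1) ≤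
      P * ∑ i ∈ Icc 1 N, r i := by
  have hMQ : M ≤ M * Q := Nat.le_mul_of_pos_right M hQ
  have hN' : N + R = M * Q + M + Q + 1 := by linarith
  have hQN : Q ≤ N := by omega
  have hCU : Ioc Q (Q + (M + 1)) ⊆ Ioc Q N := Ioc_subset_Ioc_right (by omega)
  obtain ⟨B, hBU, hBM, hB⟩ := exists_subset_card_eq_and_mul_sum_le hCU (by simp)
    (by rw [Nat.card_Ioc]; omega : #(Ioc Q N) + R = M * Q + (M + 1)) hQ r
  have hpivot : k (Q + 1) + ∑ i ∈ Ioc Q (Q + (M + 1)), r i ≤ ∑ i ∈ Icc 1 N, r i :=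
    h.add_sum_le_sum hP (by omega) (by simp) (hCU.trans (Icc_add_one_left_eq_Ioc Q N).ge)
      (by simp)
  have hcommon := h.sum_add_sum_add_mul_sum_le hP hQN hBU hBM
  have hsplit := sum_Icc_one_add_sum_Ioc hQN r
  have hPR : (P : 𝕜) + (M + 1) + R = (M + 1) * (Q + 1) := by exact_mod_cast hP ▸ hN
  have hRM : (R : 𝕜) ≤ M + 1 := by exact_mod_cast hR.trans M.le_succ
  linear_combination ((M : 𝕜) + 1 - R) * hpivot + ((M : 𝕜) + 1) * hcommon + hB
    - ((M : 𝕜) + 1) * hsplit - (∑ i ∈ Icc 1 N, r i) * hPR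

end Ordered

theorem stmt_9_general [Field 𝕜] [LinearOrder 𝕜] [IsStrictOrderedRing 𝕜] {k : ℕ → 𝕜}
    (hQ : 1 ≤ Q) (hR : R ≤ M) (hN : N + R = (M + 1) * (Q + 1)) (hP : P + (M + 1) = N)
    (hk_le : ∀ i, 1 ≤ i → i ≤ Q → k (Q + 1) ≤ k i)
    (hk_gt : ∀ j, Q < j → j ≤ N - M → k j ≤ k (Q + 1))
    {rb : 𝕜} (hrb : rb = (∑ i ∈ Icc 1 Q, k i) / P + ((P : 𝕜) - Q + 1) / P * k (Q + 1))
    {rt : ℕ → 𝕜} (hrt1 : ∀ i, 1 ≤ i → i ≤ Q → rt i = rb - k i)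
    (hrt2 : ∀ i, Q < i → i ≤ N → rt i = rb - k (Q + 1)) :
    IsFeasible N M P k rt ∧
    (∑ i ∈ Icc 1 N, rt i = (∑ i ∈ Icc 1 Q, ((N : 𝕜) - P) / P * k i)
      + ((N : 𝕜) + Q * ((P : 𝕜) - N)) / P * k (Q + 1)) ∧
    ∀ r, IsFeasible N M P k r → ∑ i ∈ Icc 1 N, rt i ≤ ∑ i ∈ Icc 1 N, r i := by
  have hP0 : (0 : 𝕜) < P := by
    have : 0 < P := by nlinarith
    exact_mod_cast this
  have hQN : Q ≤ N := by nlinarith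
  have hrt : ∀ i ∈ Icc 1 N, rt i = rb - k (Q + 1) - excess k Q i := by
    intro i hi
    obtain ⟨hi1, hiN⟩ := mem_Icc.1 hi
    unfold excess
    split_ifs with hiQ
    · rw [hrt1 i hi1 hiQ, sub_sub_sub_cancel_right]
    · rw [hrt2 i (by omega) hiN, sub_zero]
  have hlevel : P * (rb - k (Q + 1)) = k (Q + 1) + ∑ i ∈ Icc 1 Q, excess k Q i :=
    hrb ▸ mul_sub_pivot_eq_add_sum_excess hP0.ne' k Q
  have hvalue := sum_eq_of_mul_eq_add_sum_excess hP0.ne' hQN hrt hlevel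
  refine ⟨isFeasible_of_eq_sub_excess hrt hlevel hk_le hk_gt, hvalue, fun r hr => ?_⟩
  refine le_of_mul_le_mul_left (le_of_eq_of_le ?_ (hr.le_mul_sum hQ hR hN hP)) hP0
  have hNP : (N : 𝕜) - P = M + 1 := by rw [← hP]; push_cast; ring
  have hNR : (N : 𝕜) + R = (M + 1) * (Q + 1) := by exact_mod_cast hN
  rw [hvalue, ← mul_sum]
  field_simp
  linear_combination (∑ i ∈ Icc 1 Q, k i - Q * k (Q + 1)) * hNP + k (Q + 1) * hNR

end LinearProgram

/-- Lemma 1 of the paper, the closed-form exact solution of the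
over-constrained LP(9): for integers `M ≥ 0`, `Q ≥ 1`, `0 ≤ R ≤ M`,
`N = (M+1)(Q+1) - R`, `P = N - M - 1 ≥ 1`, reals `k 1 ≥ … ≥ k (N-M)`,
`r̃ = (1/P) ∑_{i=1}^{Q} k i + ((P-Q+1)/P) k (Q+1)`, `r̃ i = r̃ - k i` for `1 ≤ i ≤ Q`
and `r̃ i = r̃ - k (Q+1)` for `Q < i ≤ N`: the vector `(r̃ 1, …, r̃ N)` satisfies all
the constraints of LP(9), its value is
`∑_{i=1}^{N} r̃ i = ∑_{i=1}^{Q} ((N-P)/P) k i + ((N + Q(P-N))/P) k (Q+1)`,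
and every `(r 1, …, r N)` satisfying the constraints of LP(9) has
`∑_{i=1}^{N} r i ≥ ∑_{i=1}^{N} r̃ i`. -/
theorem stmt_9 (M Q R N P : ℕ) (hQ : 1 ≤ Q) (hR : R ≤ M)
    (hN : N + R = (M + 1) * (Q + 1)) (hP : P + (M + 1) = N) (hP1 : 1 ≤ P)
    (k : ℕ → ℝ) (hk : ∀ i j, 1 ≤ i → i ≤ j → j ≤ N - M → k j ≤ k i)
    (rb : ℝ)
    (hrb : rb = (∑ i ∈ Finset.Icc 1 Q, k i) / P + ((P : ℝ) - Q + 1) / P * k (Q + 1))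
    (rt : ℕ → ℝ) (hrt1 : ∀ i, 1 ≤ i → i ≤ Q → rt i = rb - k i)
    (hrt2 : ∀ i, Q < i → i ≤ N → rt i = rb - k (Q + 1)) :
    (∀ j, 1 ≤ j → j ≤ N - M → ∀ 𝒩 : Finset ℕ,
      𝒩 ⊆ (Finset.Icc 1 N).erase j → 𝒩.card = P → Finset.Icc 1 (j - 1) ⊆ 𝒩 →
      k j ≤ ∑ i ∈ 𝒩, rt i) ∧
    (∑ i ∈ Finset.Icc 1 N, rt i
      = (∑ i ∈ Finset.Icc 1 Q, ((N : ℝ) - P) / P * k i)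
        + ((N : ℝ) + Q * ((P : ℝ) - N)) / P * k (Q + 1)) ∧
    (∀ r : ℕ → ℝ,
      (∀ j, 1 ≤ j → j ≤ N - M → ∀ 𝒩 : Finset ℕ,
        𝒩 ⊆ (Finset.Icc 1 N).erase j → 𝒩.card = P → Finset.Icc 1 (j - 1) ⊆ 𝒩 →
        k j ≤ ∑ i ∈ 𝒩, r i) →
      ∑ i ∈ Finset.Icc 1 N, rt i ≤ ∑ i ∈ Finset.Icc 1 N, r i) := by
  have hQN : Q + 1 ≤ N - M := by
    have : M ≤ M * Q := Nat.le_mul_of_pos_right M hQ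
    have : N + R = M * Q + M + Q + 1 := by linarith
    omega
  exact stmt_9_general hQ hR hN hP (fun i hi hiQ => hk i (Q + 1) hi (by omega) hQN)
    (fun j hQj hjN => hk (Q + 1) j (by omega) hQj hjN) hrb hrt1 hrt2
end

section
/- For every real $\alpha$ with $0<\alpha<1$ and all integers $V,P$ with $1\le V<P$, $\dfrac{(1-\alpha)^{P-V}-(1-\alpha)^{P}}{1-(1-\alpha)^{P}}\ <\ \dfrac{V}{P}$. Equivalently, with $Z_{M,V}=\dfrac{(1-\alpha)^{-M-V}-(1-\alpha)^{-M}}{(1-\alpha)^{-N}-1}$ for any integers $M\ge 0$ and $N>M+P$, one has $\dfrac{Z_{M,V}}{Z_{M,P}}<\dfrac{V}{P}$. -/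
/-!
With `x = (1 - α)⁻¹ > 1`, both quotients equal `(x ^ V - 1) / (x ^ P - 1)`. After cancelling
`x - 1`, the bound compares partial sums of the geometric series: the average of its first `V`
terms is smaller than the average of its first `P` terms, because the terms strictly increase.
-/

open Finset

section Averages

variable {M : Type*} [AddCommMonoid M] [PartialOrder M] {f : ℕ → M} {m n : ℕ}

theorem nsmul_le_sum_range_add_of_monotone [IsOrderedAddMonoid M] (hf : Monotone f) (m k : ℕ) :
    k • f m ≤ ∑ i ∈ range k, f (m + i) := by
  simpa only [card_range] using
    card_nsmul_le_sum (range k) (fun i => f (m + i)) (f m) fun i _ => hf (m.le_add_right i)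

variable [IsOrderedCancelAddMonoid M]

theorem sum_range_lt_nsmul_of_strictMono (hf : StrictMono f) (hm : m ≠ 0) :
    ∑ i ∈ range m, f i < m • f m :=
  calc ∑ i ∈ range m, f i < ∑ _i ∈ range m, f m :=
        sum_lt_sum_of_nonempty (nonempty_range_iff.2 hm) fun _ hi => hf (mem_range.1 hi)
    _ = m • f m := by rw [sum_const, card_range]

theorem nsmul_sum_range_lt_nsmul_sum_range (hf : StrictMono f) (hm : m ≠ 0) (hmn : m < n) :
    n • ∑ i ∈ range m, f i < m • ∑ i ∈ range n, f i := by
  obtain ⟨k, rfl⟩ := Nat.exists_eq_add_of_le hmn.le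
  have hk : k ≠ 0 := by lia
  rw [sum_range_add, add_nsmul, nsmul_add]
  gcongr m • ∑ i ∈ range m, f i + ?_
  calc k • ∑ i ∈ range m, f i < k • m • f m :=
        nsmul_lt_nsmul_right hk (sum_range_lt_nsmul_of_strictMono hf hm)
    _ = m • k • f m := nsmul_left_comm ..
    _ ≤ m • ∑ i ∈ range k, f (m + i) :=
        nsmul_le_nsmul_right (nsmul_le_sum_range_add_of_monotone hf.monotone m k) m

end Averages

theorem mul_pow_sub_one_lt_mul_pow_sub_one {R : Type*} [Ring R] [PartialOrder R]
    [IsStrictOrderedRing R] {x : R} {m n : ℕ} (hx : 1 < x) (hm : m ≠ 0) (hmn : m < n) :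
    n * (x ^ m - 1) < m * (x ^ n - 1) := by
  simp only [← mul_geom_sum, ← nsmul_eq_mul, ← mul_smul_comm]
  exact mul_lt_mul_of_pos_left
    (nsmul_sum_range_lt_nsmul_sum_range (pow_right_strictMono₀ hx) hm hmn) (sub_pos.2 hx)

section Field

variable {K : Type*} [Field K]

theorem pow_sub_pow_div_one_sub_pow {q : K} {m n : ℕ} (hq : q ≠ 0) (hmn : m ≤ n) :
    (q ^ (n - m) - q ^ n) / (1 - q ^ n) = (q⁻¹ ^ m - 1) / (q⁻¹ ^ n - 1) := by
  rw [← mul_div_mul_left (q⁻¹ ^ m - 1) (q⁻¹ ^ n - 1) (pow_ne_zero n hq), mul_sub_one, mul_sub_one,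
    ← mul_pow, mul_inv_cancel₀ hq, one_pow, inv_pow, ← pow_sub₀ q hq hmn]

theorem zpow_add_sub_zpow_div {x : K} (hx : x ≠ 0) (k m n : ℤ) :
    (x ^ (k + m) - x ^ k) / (x ^ (k + n) - x ^ k) = (x ^ m - 1) / (x ^ n - 1) := by
  simp only [zpow_add₀ hx, ← mul_sub_one, mul_div_mul_left _ _ (zpow_ne_zero k hx)]

variable [LinearOrder K] [IsStrictOrderedRing K]

theorem pow_sub_one_div_pow_sub_one_lt {x : K} {m n : ℕ} (hx : 1 < x) (hm : m ≠ 0) (hmn : m < n) :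
    (x ^ m - 1) / (x ^ n - 1) < m / n := by
  have hn : n ≠ 0 := by lia
  rw [div_lt_div_iff₀ (sub_pos.2 (one_lt_pow₀ hx hn)) (by positivity), mul_comm]
  exact mul_pow_sub_one_lt_mul_pow_sub_one hx hm hmn

theorem stmt_12_general {α : K} (h0 : 0 < α) (h1 : α < 1) {V P : ℕ} (hV : 1 ≤ V) (hVP : V < P) :
    ((1 - α) ^ (P - V) - (1 - α) ^ P) / (1 - (1 - α) ^ P) < (V : K) / P ∧
    ∀ M N : ℤ, N ≠ 0 →
      (((1 - α) ^ (-(M + V)) - (1 - α) ^ (-M)) / ((1 - α) ^ (-N) - 1)) /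
        (((1 - α) ^ (-(M + P)) - (1 - α) ^ (-M)) / ((1 - α) ^ (-N) - 1)) < (V : K) / P := by
  have hq : 0 < 1 - α := sub_pos.2 h1
  have hx : 1 < (1 - α)⁻¹ := (one_lt_inv₀ hq).2 (sub_lt_self 1 h0)
  have bound := pow_sub_one_div_pow_sub_one_lt hx (Nat.one_le_iff_ne_zero.1 hV) hVP
  refine ⟨(pow_sub_pow_div_one_sub_pow hq.ne' hVP.le).trans_lt bound, fun M N hN => ?_⟩
  simp only [← inv_zpow']
  have hZ : (1 - α)⁻¹ ^ N - 1 ≠ 0 :=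
    sub_ne_zero.2 fun h => hN ((zpow_eq_one_iff_right₀ (inv_nonneg.2 hq.le) hx.ne').1 h)
  rwa [div_div_div_cancel_right₀ hZ, zpow_add_sub_zpow_div (inv_ne_zero hq.ne'), zpow_natCast,
    zpow_natCast]

end Field

/-- inequalities (25)/(26) of the paper: for `0 < α < 1` and integers
`1 ≤ V < P`, one has `((1-α)^(P-V) - (1-α)^P) / (1 - (1-α)^P) < V / P`; equivalently,
with `Z (M, v) = ((1-α)^{-M-v} - (1-α)^{-M}) / ((1-α)^{-N} - 1)` for any integers
`M ≥ 0` and `N > M + P`, one has `Z (M, V) / Z (M, P) < V / P`. -/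
theorem stmt_12 (α : ℝ) (h0 : 0 < α) (h1 : α < 1) (V P : ℕ) (hV : 1 ≤ V)
    (hVP : V < P) :
    (((1 - α) ^ (P - V) - (1 - α) ^ P) / (1 - (1 - α) ^ P) < (V : ℝ) / P) ∧
    (∀ M N : ℕ, M + P < N →
      ((((1 - α) ^ (-((M : ℤ) + (V : ℤ))) - (1 - α) ^ (-(M : ℤ))) /
          ((1 - α) ^ (-(N : ℤ)) - 1)) /
        (((1 - α) ^ (-((M : ℤ) + (P : ℤ))) - (1 - α) ^ (-(M : ℤ))) /
          ((1 - α) ^ (-(N : ℤ)) - 1))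
        < (V : ℝ) / P)) := by
  obtain ⟨ratio_lt, Z_ratio_lt⟩ := stmt_12_general h0 h1 hV hVP
  exact ⟨ratio_lt, fun M N hN => Z_ratio_lt M N (by lia)⟩
end

section
/- Let $N\ge 1$ and let $X_1,\dots,X_N$ be finite sets. For $i\ne j$ in $[N]$ let $k_{i,j}=\bigl|\bigl(\bigcup_{l\in[N]\setminus\{j\}}X_l\bigr)\setminus X_i\bigr|$. Then for all $m_1,m_2,n_1,n_2\in[N]$ with $\{m_1,m_2\}\cap\{n_1,n_2\}=\emptyset$ and $n_1\ne n_2$ (indices within each pair may coincide), $k_{m_1,n_1}-k_{m_1,n_2}=k_{m_2,n_1}-k_{m_2,n_2}$. -/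
/-- The paper's `k i j` for clients `i ∈ s` holding packet sets `X i`: the number of packets that
client `i` has to learn when client `j ≠ i` is the unreliable one. -/
def missingCard {ι γ : Type*} [DecidableEq ι] [DecidableEq γ] (s : Finset ι) (X : ι → Finset γ)
    (i j : ι) : ℕ :=
  ((s.erase j).biUnion X \ X i).card

section

variable {ι γ : Type*} [DecidableEq ι] [DecidableEq γ] {s : Finset ι}

theorem cast_missingCard {R : Type*} [AddGroupWithOne R] (X : ι → Finset γ) {i j : ι}
    (hi : i ∈ s) (hij : i ≠ j) :
    (missingCard s X i j : R) = ((s.erase j).biUnion X).card - (X i).card :=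
  Finset.cast_card_sdiff (Finset.subset_biUnion_of_mem X (Finset.mem_erase.mpr ⟨hij, hi⟩))

theorem cast_missingCard_sub_cast_missingCard {R : Type*} [AddGroupWithOne R] (X : ι → Finset γ)
    {m n₁ n₂ : ι} (hm : m ∈ s) (h₁ : m ≠ n₁) (h₂ : m ≠ n₂) :
    (missingCard s X m n₁ : R) - missingCard s X m n₂ =
      ((s.erase n₁).biUnion X).card - ((s.erase n₂).biUnion X).card := by
  rw [cast_missingCard X hm h₁, cast_missingCard X hm h₂, sub_sub_sub_cancel_right]

theorem stmt_13_general (X : ι → Finset γ) {m₁ m₂ n₁ n₂ : ι} (hm₁ : m₁ ∈ s) (hm₂ : m₂ ∈ s)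
    (h₁₁ : m₁ ≠ n₁) (h₁₂ : m₁ ≠ n₂) (h₂₁ : m₂ ≠ n₁) (h₂₂ : m₂ ≠ n₂) :
    (missingCard s X m₁ n₁ : ℤ) - missingCard s X m₁ n₂ =
      missingCard s X m₂ n₁ - missingCard s X m₂ n₂ := by
  rw [cast_missingCard_sub_cast_missingCard X hm₁ h₁₁ h₁₂,
    cast_missingCard_sub_cast_missingCard X hm₂ h₂₁ h₂₂]

end

/-- Lemma 8 of the paper: with clients `1,…,N` holding finite packet
sets `X i` and `k i j = |(⋃_{l ∈ [N] \ {j}} X l) \ X i|` for `i ≠ j`, for all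
`m₁, m₂, n₁, n₂ ∈ [N]` with `{m₁, m₂} ∩ {n₁, n₂} = ∅` and `n₁ ≠ n₂`,
`k m₁ n₁ - k m₁ n₂ = k m₂ n₁ - k m₂ n₂`. -/
theorem stmt_13 {γ : Type*} [DecidableEq γ] (N : ℕ) (hN : 1 ≤ N) (X : ℕ → Finset γ)
    (k : ℕ → ℕ → ℕ)
    (hk : ∀ i j, k i j = ((((Finset.Icc 1 N).erase j).biUnion X) \ X i).card)
    (m₁ m₂ n₁ n₂ : ℕ)
    (hm₁ : m₁ ∈ Finset.Icc 1 N) (hm₂ : m₂ ∈ Finset.Icc 1 N)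
    (hn₁ : n₁ ∈ Finset.Icc 1 N) (hn₂ : n₂ ∈ Finset.Icc 1 N)
    (h₁₁ : m₁ ≠ n₁) (h₁₂ : m₁ ≠ n₂) (h₂₁ : m₂ ≠ n₁) (h₂₂ : m₂ ≠ n₂)
    (hn : n₁ ≠ n₂) :
    (k m₁ n₁ : ℤ) - (k m₁ n₂ : ℤ) = (k m₂ n₁ : ℤ) - (k m₂ n₂ : ℤ) := by
  obtain rfl : k = missingCard (Finset.Icc 1 N) X := funext₂ hk
  exact stmt_13_general X hm₁ hm₂ h₁₁ h₁₂ h₂₁ h₂₂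
end

section
/- Let $N\ge 3$ and let $X_1,\dots,X_N$ be finite sets, and for $i\ne j$ let $k_{i,j}=\bigl|\bigl(\bigcup_{l\in[N]\setminus\{j\}}X_l\bigr)\setminus X_i\bigr|$. Assume the labeling satisfies $k_{i,j}\ge k_{j,i}$ for all $1\le i<j\le N$. Then for all $1\le n<m_1\le m_2\le N$, $k_{m_1,n}-k_{m_2,n}\ \ge\ k_{n,m_1}-k_{n,m_2}$. -/
/-!
For `i ≠ j` in `s` the set `X i` lies in `U j = ⋃_{l ∈ s \ {j}} X l`, so `k i j = |U j| - |X i|`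
is a function of `j` minus a function of `i`. Hence the sum of `k` around a triangle of indices does
not depend on the orientation, and for the triangle `n, m₁, m₂` this turns the claimed inequality
into the labeling condition `k m₂ m₁ ≤ k m₁ m₂`.
-/

section MissingCount

open Finset

variable {ι γ : Type*} [DecidableEq ι] [DecidableEq γ] {s : Finset ι} {X : ι → Finset γ}

/-- The paper's `k_{i,j}` for the clients in `s`: the number of packets that client `i` lacks among
those held by the clients other than `j`. The case `i = j` is allowed. -/
def missingCount (s : Finset ι) (X : ι → Finset γ) (i j : ι) : ℕ :=
  #((s.erase j).biUnion X \ X i)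

theorem missingCount_add_card {i j : ι} (hi : i ∈ s) (hij : i ≠ j) :
    missingCount s X i j + #(X i) = #((s.erase j).biUnion X) :=
  card_sdiff_add_card_eq_card (subset_biUnion_of_mem X (mem_erase.2 ⟨hij, hi⟩))

theorem missingCount_cycle_eq_reverse {a b c : ι} (ha : a ∈ s) (hb : b ∈ s) (hc : c ∈ s) :
    missingCount s X a b + missingCount s X b c + missingCount s X c a =
      missingCount s X b a + missingCount s X c b + missingCount s X a c := by
  rcases eq_or_ne a b with rfl | hab
  · ring
  rcases eq_or_ne b c with rfl | hbc
  · ring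
  rcases eq_or_ne c a with rfl | hca
  · ring
  have hcard_ba := missingCount_add_card (X := X) hb hab.symm
  have hcard_ca := missingCount_add_card (X := X) hc hca
  have hcard_ab := missingCount_add_card (X := X) ha hab
  have hcard_cb := missingCount_add_card (X := X) hc hbc.symm
  have hcard_ac := missingCount_add_card (X := X) ha hca.symm
  have hcard_bc := missingCount_add_card (X := X) hb hbc
  lia

theorem stmt_14_general {n m₁ m₂ : ι} (hn : n ∈ s) (hm₁ : m₁ ∈ s) (hm₂ : m₂ ∈ s) :
    (missingCount s X n m₁ : ℤ) - missingCount s X n m₂ ≤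
        (missingCount s X m₁ n : ℤ) - missingCount s X m₂ n ↔
      missingCount s X m₂ m₁ ≤ missingCount s X m₁ m₂ := by
  have hcycle := missingCount_cycle_eq_reverse (X := X) hn hm₁ hm₂
  lia

end MissingCount

/-- Lemma 9 of the paper: with clients `1,…,N` (`N ≥ 3`) holding finite
packet sets `X i`, `k i j = |(⋃_{l ∈ [N] \ {j}} X l) \ X i|` for `i ≠ j`, and the
labeling condition `k i j ≥ k j i` for all `1 ≤ i < j ≤ N`, for all
`1 ≤ n < m₁ ≤ m₂ ≤ N` one has `k m₁ n - k m₂ n ≥ k n m₁ - k n m₂`. -/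
theorem stmt_14 {γ : Type*} [DecidableEq γ] (N : ℕ) (hN : 3 ≤ N) (X : ℕ → Finset γ)
    (k : ℕ → ℕ → ℕ)
    (hk : ∀ i j, k i j = ((((Finset.Icc 1 N).erase j).biUnion X) \ X i).card)
    (hlabel : ∀ i j, 1 ≤ i → i < j → j ≤ N → k j i ≤ k i j)
    (n m₁ m₂ : ℕ) (hn : 1 ≤ n) (hnm₁ : n < m₁) (hm₁₂ : m₁ ≤ m₂) (hm₂ : m₂ ≤ N) :
    (k n m₁ : ℤ) - (k n m₂ : ℤ) ≤ (k m₁ n : ℤ) - (k m₂ n : ℤ) := by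
  obtain rfl : k = missingCount (Finset.Icc 1 N) X := funext₂ hk
  refine (stmt_14_general (Finset.mem_Icc.2 (by lia)) (Finset.mem_Icc.2 (by lia))
    (Finset.mem_Icc.2 (by lia))).2 ?_
  rcases hm₁₂.eq_or_lt with rfl | hlt
  · rfl
  · exact hlabel m₁ m₂ (by lia) hlt hm₂
end

section
/- Let $Q\ge 1$ and $R\in\{0,1\}$ be integers, $N=2(Q+1)-R$, $P=N-2$, and let reals $k_{i,j}$ ($1\le i\ne j\le N$) be given. Define $\lambda_{m,n}$ for $1\le m<n\le N$ by: $\lambda_{m,n}=k_{m,N}-k_{1,N}+k_{1,N-Q}-k_{N-Q,N}+k_{n,N}$ if $n\le N-Q$; $\lambda_{m,n}=k_{m,N}-k_{1,N}+k_{1,n}$ if $m\le N-Q<n$; $\lambda_{m,n}=k_{1,m}-k_{1,N}+k_{N-Q,N}-k_{1,N-Q}+k_{1,n}$ if $N-Q<m$. Define $\tilde r=\tfrac1P\sum_{i=1}^{N-Q-1}k_{i,N}+\tfrac{Q}{P}k_{N-Q,N}+\tfrac1P\sum_{i=N-Q+1}^{N-1}k_{1,i}+\tfrac{N-Q-1}{P}k_{1,N-Q}$,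 and $\tilde r_i=\tilde r-k_{i,N}-k_{1,N-Q}$ for $1\le i\le N-Q$, $\tilde r_i=\tilde r-k_{N-Q,N}-k_{1,i}$ for $N-Q<i\le N$. Then for all $1\le m<n\le N$, $\sum_{i\in[N]\setminus\{m,n\}}\tilde r_i=\lambda_{m,n}$ (so every constraint of LP(16) holds with equality). -/
/-!
Only the entries `a i = k i N` and `b i = k 1 i` of `k` matter. With the pivot `p = N - Q` and
`w = pivotWeight a b p`, the candidate is `r̃ i = r̃ - w i`, the right-hand sides are
`λ m n = w m + w n - c` for the single constant `c = a p + b p + b N`, and `r̃` is chosen so that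
`P * r̃ = ∑ i, w i - c`. Removing two of the `N = P + 2` indices from `∑ i, (r̃ - w i)` therefore
leaves `P * r̃ - ∑ i, w i + w m + w n = λ m n`.
-/

open Finset

/-- The weight `w i` subtracted from the common value `r̃` in the candidate solution of LP(16), so
that `r̃ i = r̃ - w i`. The two pieces meet at the pivot index `p`, which stands for `N - Q`; the
sequences `a` and `b` stand for the last column `k · N` and the first row `k 1 ·`. -/
def pivotWeight {M : Type*} [Add M] (a b : ℕ → M) (p i : ℕ) : M :=
  if i ≤ p then a i + b p else a p + b i

theorem pivotWeight_of_le {M : Type*} [Add M] (a b : ℕ → M) {p i : ℕ} (h : i ≤ p) :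
    pivotWeight a b p i = a i + b p :=
  if_pos h

theorem pivotWeight_of_lt {M : Type*} [Add M] (a b : ℕ → M) {p i : ℕ} (h : p < i) :
    pivotWeight a b p i = a p + b i :=
  if_neg h.not_ge

theorem sum_Icc_pivotWeight {M : Type*} [AddCommMonoid M] (a b : ℕ → M) {p N : ℕ} (h : p ≤ N) :
    ∑ i ∈ Icc 1 N, pivotWeight a b p i =
      (∑ i ∈ Icc 1 p, a i + p • b p) + ((N - p) • a p + ∑ i ∈ Icc (p + 1) N, b i) := by
  have hlow : ∑ i ∈ Icc 1 p, pivotWeight a b p i = ∑ i ∈ Icc 1 p, a i + p • b p := by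
    rw [sum_congr rfl fun i hi ↦ pivotWeight_of_le a b (mem_Icc.1 hi).2]
    simp [sum_add_distrib]
  have hhigh : ∑ i ∈ Icc (p + 1) N, pivotWeight a b p i =
      (N - p) • a p + ∑ i ∈ Icc (p + 1) N, b i := by
    rw [sum_congr rfl fun i hi ↦ pivotWeight_of_lt a b (mem_Icc.1 hi).1]
    simp [sum_add_distrib]
  rw [← hlow, ← hhigh]
  simpa only [Icc_add_one_left_eq_Ioc, ← Icc_add_one_left_eq_Ioc 0, zero_add] using
    (sum_Ioc_consecutive (pivotWeight a b p) p.zero_le h).symm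

theorem sum_Icc_pivotWeight_sub {A : Type*} [CommRing A] (a b : ℕ → A) {p Q N : ℕ} (hp : 1 ≤ p)
    (hQ : 1 ≤ Q) (hpQ : p + Q = N) :
    ∑ i ∈ Icc 1 N, pivotWeight a b p i - (a p + b p + b N) =
      ∑ i ∈ Icc 1 (p - 1), a i + Q * a p + ∑ i ∈ Icc (p + 1) (N - 1), b i
        + ((N : A) - Q - 1) * b p := by
  have ha : ∑ i ∈ Icc 1 p, a i = ∑ i ∈ Icc 1 (p - 1), a i + a p := by
    simpa only [Nat.sub_add_cancel hp] using sum_Icc_succ_top (by omega : 1 ≤ p - 1 + 1) a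
  have hb : ∑ i ∈ Icc (p + 1) N, b i = ∑ i ∈ Icc (p + 1) (N - 1), b i + b N := by
    have hN : N - 1 + 1 = N := by omega
    simpa only [hN] using sum_Icc_succ_top (by omega : p + 1 ≤ N - 1 + 1) b
  rw [sum_Icc_pivotWeight a b (by omega), ha, hb, ← hpQ, Nat.add_sub_cancel_left]
  push_cast [nsmul_eq_mul]
  ring

theorem sum_sdiff_const_sub_of_card_nsmul {ι G : Type*} [DecidableEq ι] [AddCommGroup G]
    {s t : Finset ι} (hts : t ⊆ s) (f : ι → G) {x c : G}
    (hx : #(s \ t) • x = ∑ i ∈ s, f i - c) :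
    ∑ i ∈ s \ t, (x - f i) = ∑ i ∈ t, f i - c := by
  rw [sum_sub_distrib, sum_const, hx, ← sum_sdiff hts]
  abel

theorem sum_sdiff_pair_const_sub {ι G : Type*} [DecidableEq ι] [AddCommGroup G] {s : Finset ι}
    {m n : ι} (hm : m ∈ s) (hn : n ∈ s) (hmn : m ≠ n) {P : ℕ} (hP : #s = P + 2) (f : ι → G)
    {x c : G} (hx : P • x = ∑ i ∈ s, f i - c) :
    ∑ i ∈ s \ {m, n}, (x - f i) = f m + f n - c := by
  have hsub : {m, n} ⊆ s := insert_subset hm (singleton_subset_iff.2 hn)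
  have hcard : #(s \ {m, n}) = P := by
    rw [card_sdiff_of_subset hsub, card_pair hmn, hP, Nat.add_sub_cancel]
  rw [sum_sdiff_const_sub_of_card_nsmul hsub f (hcard ▸ hx), sum_pair hmn]

theorem stmt_16_general {K : Type*} [Field K] {p Q N P : ℕ} (hp : 1 ≤ p) (hQ : 1 ≤ Q)
    (hpQ : p + Q = N) (hP : P + 2 = N) (hP0 : (P : K) ≠ 0)
    (a b : ℕ → K) (lam : ℕ → ℕ → K)
    (hlam1 : ∀ m n, 1 ≤ m → m < n → n ≤ p → lam m n = a m - b N + b p - a p + a n)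
    (hlam2 : ∀ m n, 1 ≤ m → m ≤ p → p < n → n ≤ N → lam m n = a m - b N + b n)
    (hlam3 : ∀ m n, p < m → m < n → n ≤ N → lam m n = b m - b N + a p - b p + b n)
    (rb : K)
    (hrb : rb = (∑ i ∈ Icc 1 (p - 1), a i) / P + (Q : K) / P * a p
      + (∑ i ∈ Icc (p + 1) (N - 1), b i) / P + ((N : K) - Q - 1) / P * b p)
    (rt : ℕ → K)
    (hrt1 : ∀ i, 1 ≤ i → i ≤ p → rt i = rb - a i - b p)
    (hrt2 : ∀ i, p < i → i ≤ N → rt i = rb - a p - b i) :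
    ∀ m n, 1 ≤ m → m < n → n ≤ N → ∑ i ∈ Icc 1 N \ {m, n}, rt i = lam m n := by
  intro m n hm hmn hn
  have hmean : P • rb = ∑ i ∈ Icc 1 N, pivotWeight a b p i - (a p + b p + b N) := by
    rw [nsmul_eq_mul, sum_Icc_pivotWeight_sub a b hp hQ hpQ, hrb]
    field_simp
  have hrt : ∀ i ∈ Icc 1 N \ {m, n}, rt i = rb - pivotWeight a b p i := by
    intro i hi
    obtain ⟨hi1, hiN⟩ := mem_Icc.1 (mem_sdiff.1 hi).1
    rcases le_or_gt i p with h | h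
    · rw [hrt1 i hi1 h, pivotWeight_of_le a b h, sub_sub]
    · rw [hrt2 i h hiN, pivotWeight_of_lt a b h, sub_sub]
  have hlam : lam m n = pivotWeight a b p m + pivotWeight a b p n - (a p + b p + b N) := by
    rcases le_or_gt n p with hnp | hpn
    · rw [hlam1 m n hm hmn hnp, pivotWeight_of_le a b (hmn.le.trans hnp), pivotWeight_of_le a b hnp]
      ring
    rcases le_or_gt m p with hmp | hpm
    · rw [hlam2 m n hm hmp hpn hn, pivotWeight_of_le a b hmp, pivotWeight_of_lt a b hpn]
      ring
    · rw [hlam3 m n hpm hmn hn, pivotWeight_of_lt a b hpm, pivotWeight_of_lt a b hpn]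
      ring
  rw [sum_congr rfl hrt, hlam]
  exact sum_sdiff_pair_const_sub (mem_Icc.2 ⟨hm, hmn.le.trans hn⟩)
    (mem_Icc.2 ⟨hm.trans hmn.le, hn⟩) hmn.ne (by simp [hP]) _ hmean

/-- Lemma 12 of the paper, feasibility with equality for LP(16): with
`Q ≥ 1`, `R ∈ {0,1}`, `N = 2(Q+1) - R`, `P = N - 2`, arbitrary reals `k i j` (`i ≠ j`),
`λ m n` defined for `1 ≤ m < n ≤ N` as in equation (15),
`r̃ = (1/P) ∑_{i=1}^{N-Q-1} k i N + (Q/P) k (N-Q) N + (1/P) ∑_{i=N-Q+1}^{N-1} k 1 i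
  + ((N-Q-1)/P) k 1 (N-Q)`, and `r̃ i = r̃ - k i N - k 1 (N-Q)` for `1 ≤ i ≤ N-Q`,
`r̃ i = r̃ - k (N-Q) N - k 1 i` for `N-Q < i ≤ N`: for all `1 ≤ m < n ≤ N`,
`∑_{i ∈ [N] \ {m,n}} r̃ i = λ m n`, so every constraint of LP(16) holds with equality. -/
theorem stmt_16 (Q R N P : ℕ) (hQ : 1 ≤ Q) (hR : R ≤ 1)
    (hN : N + R = 2 * (Q + 1)) (hP : P + 2 = N)
    (k : ℕ → ℕ → ℝ) (lam : ℕ → ℕ → ℝ)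
    (hlam1 : ∀ m n, 1 ≤ m → m < n → n ≤ N - Q →
      lam m n = k m N - k 1 N + k 1 (N - Q) - k (N - Q) N + k n N)
    (hlam2 : ∀ m n, 1 ≤ m → m ≤ N - Q → N - Q < n → n ≤ N →
      lam m n = k m N - k 1 N + k 1 n)
    (hlam3 : ∀ m n, N - Q < m → m < n → n ≤ N →
      lam m n = k 1 m - k 1 N + k (N - Q) N - k 1 (N - Q) + k 1 n)
    (rb : ℝ)
    (hrb : rb = (∑ i ∈ Finset.Icc 1 (N - Q - 1), k i N) / P
      + (Q : ℝ) / P * k (N - Q) N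
      + (∑ i ∈ Finset.Icc (N - Q + 1) (N - 1), k 1 i) / P
      + ((N : ℝ) - Q - 1) / P * k 1 (N - Q))
    (rt : ℕ → ℝ)
    (hrt1 : ∀ i, 1 ≤ i → i ≤ N - Q → rt i = rb - k i N - k 1 (N - Q))
    (hrt2 : ∀ i, N - Q < i → i ≤ N → rt i = rb - k (N - Q) N - k 1 i) :
    ∀ m n, 1 ≤ m → m < n → n ≤ N →
      ∑ i ∈ Finset.Icc 1 N \ {m, n}, rt i = lam m n :=
  stmt_16_general (p := N - Q) (by omega) hQ (by omega) hP (Nat.cast_ne_zero.2 (by omega))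
    (k · N) (k 1) lam hlam1 hlam2 hlam3 rb hrb rt hrt1 hrt2
end

section
/- Let $Q\ge 1$ and $R\in\{0,1\}$ be integers, $N=2(Q+1)-R$, $P=N-2$, and let reals $k_{i,j}$ ($1\le i\ne j\le N$) be given, with $\lambda_{m,n}$, $\tilde r$ and $\tilde r_1,\dots,\tilde r_N$ defined as in LP(16) and equation (12). Then $(\tilde r_1,\dots,\tilde r_N)$ is an optimal solution of LP(16): it satisfies all constraints $\sum_{i\in[N]\setminus\{m,n\}}\tilde r_i\ge\lambda_{m,n}$; its value satisfies $\sum_{i=1}^{N}\tilde r_i=\tfrac{2-P}{P}k_{1,N}+\sum_{i=2}^{N-Q-1}\tfrac{2}{P}k_{i,N}+\tfrac{R}{P}k_{N-Q,N}+\sum_{i=N-Q+1}^{N-1}\tfrac{2}{P}k_{1,i}+\tfrac{2-R}{P}k_{1,N-Q}$; and every $(r_1,\dots,r_N)$ satisfying all the constraints has $\sum_{i=1}^N r_i\ge\sum_{i=1}^N\tilde r_i$. -/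
/-!
Set `T = N - Q`. All data of the linear program come from one weight `w i`, equal to
`k i N + k 1 T` for `i ≤ T` and to `k T N + k 1 i` for `i > T`, and one constant
`c = k 1 N + k 1 T + k T N`: one has `λ m n = w m + w n - c`, `r̃ = (∑ i, w i - c) / (N - 2)` and
`r̃ i = r̃ - w i`. Summing `r̃ i` over all indices except `m` and `n` then gives exactly
`w m + w n - c`, so every constraint is tight at `r̃`. A feasible `r` therefore has at least as
large a sum as `r̃` over the complement of each pair, and adding these inequalities over all pairs,
where each index occurs equally often, compares the total sums.
-/

open Finset

section DoubleCounting

variable {ι M : Type*} {s : Finset ι}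

theorem sum_powersetCard_sum [AddCommMonoid M] {n : ℕ} (hn : n ≠ 0) (f : ι → M) :
    ∑ t ∈ s.powersetCard n, ∑ i ∈ t, f i = (#s - 1).choose (n - 1) • ∑ i ∈ s, f i := by
  classical
  have card_containing (i : ι) (hi : i ∈ s) :
      #{t ∈ s.powersetCard n | i ∈ t} = (#s - 1).choose (n - 1) := by
    simpa using card_filter_powersetCard_subset {i} s n (by simpa using hi)
      (by simpa using Nat.one_le_iff_ne_zero.mpr hn)
  calc ∑ t ∈ s.powersetCard n, ∑ i ∈ t, f i
      = ∑ i ∈ s, ∑ t ∈ s.powersetCard n with i ∈ t, f i :=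
        sum_comm' fun t i ↦ by grind
    _ = ∑ i ∈ s, (#s - 1).choose (n - 1) • f i :=
        sum_congr rfl fun i hi ↦ by rw [sum_const, card_containing i hi]
    _ = (#s - 1).choose (n - 1) • ∑ i ∈ s, f i := sum_nsmul _ _ _

variable [AddCommMonoid M] [LinearOrder M] [IsOrderedCancelAddMonoid M] {f g : ι → M}

theorem sum_le_sum_of_forall_card_eq {n : ℕ} (hn : n ≠ 0) (hns : n ≤ #s)
    (h : ∀ t ⊆ s, #t = n → ∑ i ∈ t, f i ≤ ∑ i ∈ t, g i) :
    ∑ i ∈ s, f i ≤ ∑ i ∈ s, g i := by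
  have choose_ne_zero : (#s - 1).choose (n - 1) ≠ 0 :=
    (Nat.choose_pos (Nat.sub_le_sub_right hns 1)).ne'
  refine le_of_nsmul_le_nsmul_right choose_ne_zero ?_
  rw [← sum_powersetCard_sum hn, ← sum_powersetCard_sum hn]
  refine sum_le_sum fun t ht ↦ ?_
  obtain ⟨hts, htn⟩ := mem_powersetCard.mp ht
  exact h t hts htn

theorem sum_le_sum_of_forall_sdiff_pair [DecidableEq ι] (hs : 2 < #s)
    (h : ∀ m ∈ s, ∀ n ∈ s, m ≠ n → ∑ i ∈ s \ {m, n}, f i ≤ ∑ i ∈ s \ {m, n}, g i) :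
    ∑ i ∈ s, f i ≤ ∑ i ∈ s, g i := by
  refine sum_le_sum_of_forall_card_eq (Nat.sub_ne_zero_of_lt hs) (Nat.sub_le _ 2)
    fun t hts ht ↦ ?_
  have card_compl : #(s \ t) = 2 := by rw [card_sdiff_of_subset hts]; lia
  obtain ⟨m, n, hmn, hst⟩ := card_eq_two.mp card_compl
  have hm : m ∈ s := sdiff_subset (hst ▸ mem_insert_self m {n})
  have hn : n ∈ s := sdiff_subset (hst ▸ mem_insert_of_mem (mem_singleton_self n))
  rw [← Finset.sdiff_sdiff_eq_self hts, hst]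
  exact h m hm n hn hmn

theorem sum_le_sum_of_forall_lt_sdiff_pair [LinearOrder ι] (hs : 2 < #s)
    (h : ∀ m ∈ s, ∀ n ∈ s, m < n → ∑ i ∈ s \ {m, n}, f i ≤ ∑ i ∈ s \ {m, n}, g i) :
    ∑ i ∈ s, f i ≤ ∑ i ∈ s, g i := by
  refine sum_le_sum_of_forall_sdiff_pair hs fun m hm n hn hmn ↦ ?_
  obtain hlt | hgt := hmn.lt_or_gt
  · exact h m hm n hn hlt
  · rw [pair_comm]
    exact h n hn m hm hgt

end DoubleCounting

section ConstantMinusWeight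

variable {ι A : Type*} [CommRing A] {s : Finset ι} {r w : ι → A} {ρ c : A}

theorem sum_const_sub_eq_two_mul_sub (hr : ∀ i ∈ s, r i = ρ - w i)
    (hρ : (#s - 2) * ρ = ∑ i ∈ s, w i - c) :
    ∑ i ∈ s, r i = 2 * ρ - c := by
  rw [sum_congr rfl hr, sum_sub_distrib, sum_const, nsmul_eq_mul]
  linear_combination hρ

theorem sum_sdiff_pair_const_sub_eq [DecidableEq ι] (hr : ∀ i ∈ s, r i = ρ - w i)
    (hρ : (#s - 2) * ρ = ∑ i ∈ s, w i - c) {m n : ι} (hm : m ∈ s) (hn : n ∈ s) (hmn : m ≠ n) :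
    ∑ i ∈ s \ {m, n}, r i = w m + w n - c := by
  rw [sum_sdiff_eq_sub (insert_subset hm (singleton_subset_iff.mpr hn)), sum_pair hmn,
    sum_const_sub_eq_two_mul_sub hr hρ, hr m hm, hr n hn]
  ring

end ConstantMinusWeight

theorem sum_Icc_ite_le {M : Type*} [AddCommMonoid M] {a T b : ℕ} (haT : a ≤ T + 1) (hTb : T ≤ b)
    (f g : ℕ → M) :
    ∑ i ∈ Icc a b, (if i ≤ T then f i else g i)
      = ∑ i ∈ Icc a T, f i + ∑ i ∈ Icc (T + 1) b, g i := by
  have filter_le : {i ∈ Icc a b | i ≤ T} = Icc a T := by grind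
  have filter_not_le : {i ∈ Icc a b | ¬ i ≤ T} = Icc (T + 1) b := by grind
  rw [sum_ite, filter_le, filter_not_le]

section PairWeight

variable {A : Type*}

/-- The weight `w i` for which, with `T = N - Q`, the constraint bound of the linear program is
`λ m n = w m + w n - pairOffset k N T` and its solution is `r̃ i = r̃ - w i`. -/
def pairWeight [Add A] (k : ℕ → ℕ → A) (N T i : ℕ) : A :=
  if i ≤ T then k i N + k 1 T else k T N + k 1 i

/-- The constant `c` in `λ m n = w m + w n - c`, where `w = pairWeight k N T`. -/
def pairOffset [Add A] (k : ℕ → ℕ → A) (N T : ℕ) : A :=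
  k 1 N + k 1 T + k T N

theorem sum_pairWeight_sub_pairOffset [CommRing A] (k : ℕ → ℕ → A) {N T : ℕ} (hT : 1 ≤ T)
    (hTN : T < N) :
    ∑ i ∈ Icc 1 N, pairWeight k N T i - pairOffset k N T
      = ∑ i ∈ Icc 1 (T - 1), k i N + (N - T) * k T N
        + ∑ i ∈ Icc (T + 1) (N - 1), k 1 i + (T - 1) * k 1 T := by
  have sum_left : ∑ i ∈ Icc 1 T, k i N = ∑ i ∈ Icc 1 (T - 1), k i N + k T N := by
    obtain ⟨t, rfl⟩ := Nat.exists_eq_add_of_le' hT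
    exact sum_Icc_succ_top hT _
  have sum_right : ∑ i ∈ Icc (T + 1) N, k 1 i = ∑ i ∈ Icc (T + 1) (N - 1), k 1 i + k 1 N := by
    obtain ⟨n, rfl⟩ := Nat.exists_eq_add_of_le' (hT.trans hTN.le)
    exact sum_Icc_succ_top hTN _
  simp only [pairWeight, pairOffset, sum_Icc_ite_le (Nat.le_add_left 1 T) hTN.le,
    sum_add_distrib, sum_left, sum_right, sum_const, Nat.card_Icc, nsmul_eq_mul,
    Nat.add_sub_cancel, Nat.add_sub_add_right, Nat.cast_sub hTN.le]
  ring

end PairWeight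

theorem stmt_17_general {K : Type*} [Field K] [LinearOrder K] [IsStrictOrderedRing K]
    (Q N P : ℕ) (R : K) (hQ : 1 ≤ Q) (hQN : Q + 2 ≤ N)
    (hN : (N : K) + R = 2 * (Q + 1)) (hP : P + 2 = N)
    (k : ℕ → ℕ → K) (lam : ℕ → ℕ → K)
    (hlam1 : ∀ m n, 1 ≤ m → m < n → n ≤ N - Q →
      lam m n = k m N - k 1 N + k 1 (N - Q) - k (N - Q) N + k n N)
    (hlam2 : ∀ m n, 1 ≤ m → m ≤ N - Q → N - Q < n → n ≤ N →
      lam m n = k m N - k 1 N + k 1 n)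
    (hlam3 : ∀ m n, N - Q < m → m < n → n ≤ N →
      lam m n = k 1 m - k 1 N + k (N - Q) N - k 1 (N - Q) + k 1 n)
    (rb : K)
    (hrb : rb = (∑ i ∈ Icc 1 (N - Q - 1), k i N) / P
      + (Q : K) / P * k (N - Q) N
      + (∑ i ∈ Icc (N - Q + 1) (N - 1), k 1 i) / P
      + ((N : K) - Q - 1) / P * k 1 (N - Q))
    (rt : ℕ → K)
    (hrt1 : ∀ i, 1 ≤ i → i ≤ N - Q → rt i = rb - k i N - k 1 (N - Q))
    (hrt2 : ∀ i, N - Q < i → i ≤ N → rt i = rb - k (N - Q) N - k 1 i) :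
    (∀ m n, 1 ≤ m → m < n → n ≤ N →
      lam m n ≤ ∑ i ∈ Icc 1 N \ {m, n}, rt i) ∧
    (∑ i ∈ Icc 1 N, rt i
      = (2 - (P : K)) / P * k 1 N
        + (∑ i ∈ Icc 2 (N - Q - 1), 2 / (P : K) * k i N)
        + R / P * k (N - Q) N
        + (∑ i ∈ Icc (N - Q + 1) (N - 1), 2 / (P : K) * k 1 i)
        + (2 - R) / P * k 1 (N - Q)) ∧
    (∀ r : ℕ → K,
      (∀ m n, 1 ≤ m → m < n → n ≤ N →
        lam m n ≤ ∑ i ∈ Icc 1 N \ {m, n}, r i) →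
      ∑ i ∈ Icc 1 N, rt i ≤ ∑ i ∈ Icc 1 N, r i) := by
  set w := pairWeight k N (N - Q) with hw
  set c := pairOffset k N (N - Q) with hc
  have hP0 : (P : K) ≠ 0 := Nat.cast_ne_zero.mpr (by lia)
  have hNP : (N : K) = P + 2 := mod_cast hP.symm
  have lam_eq (m n : ℕ) (hm : 1 ≤ m) (hmn : m < n) (hn : n ≤ N) : lam m n = w m + w n - c := by
    simp only [hw, hc, pairWeight, pairOffset]
    grind
  have rt_eq : ∀ i ∈ Icc 1 N, rt i = rb - w i := by
    simp only [hw, pairWeight, mem_Icc]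
    grind
  have rb_eq : ((#(Icc 1 N) : K) - 2) * rb = ∑ i ∈ Icc 1 N, w i - c := by
    rw [hw, hc, sum_pairWeight_sub_pairOffset k (by lia) (by lia), hrb, Nat.card_Icc,
      Nat.add_sub_cancel, Nat.cast_sub (by lia), hNP]
    field_simp
    ring
  have tight (m n : ℕ) (hm : 1 ≤ m) (hmn : m < n) (hn : n ≤ N) :
      lam m n = ∑ i ∈ Icc 1 N \ {m, n}, rt i := by
    rw [lam_eq m n hm hmn hn, sum_sdiff_pair_const_sub_eq rt_eq rb_eq
      (mem_Icc.mpr ⟨hm, by lia⟩) (mem_Icc.mpr ⟨by lia, hn⟩) hmn.ne]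
  refine ⟨fun m n hm hmn hn ↦ (tight m n hm hmn hn).le, ?_, fun r hr ↦ ?_⟩
  · have sum_head : ∑ i ∈ Icc 1 (N - Q - 1), k i N
        = k 1 N + ∑ i ∈ Icc 2 (N - Q - 1), k i N :=
      (add_sum_Ioc_eq_sum_Icc (f := fun i ↦ k i N) (by lia)).symm
    rw [sum_const_sub_eq_two_mul_sub rt_eq rb_eq, hc, pairOffset, hrb, sum_head, ← mul_sum,
      ← mul_sum, eq_sub_of_add_eq' hN, hNP]
    field_simp
    ring
  · refine sum_le_sum_of_forall_lt_sdiff_pair (by rw [Nat.card_Icc]; lia) fun m hm n hn hmn ↦ ?_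
    rw [mem_Icc] at hm hn
    exact (tight m n hm.1 hmn hn.2).symm.trans_le (hr m n hm.1 hmn hn.2)

/-- Lemma 11 of the paper, closed-form exact solution of the
over-constrained `M = 1` LP(16): with `Q ≥ 1`, `R ∈ {0,1}`, `N = 2(Q+1) - R`,
`P = N - 2`, arbitrary reals `k i j` (`i ≠ j`), `λ m n` as in equation (15), and
`r̃, r̃ 1, …, r̃ N` as in equation (12): `(r̃ 1, …, r̃ N)` satisfies all constraints
`∑_{i ∈ [N] \ {m,n}} r̃ i ≥ λ m n`, its value is
`∑_{i=1}^{N} r̃ i = ((2-P)/P) k 1 N + ∑_{i=2}^{N-Q-1} (2/P) k i N + (R/P) k (N-Q) N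
  + ∑_{i=N-Q+1}^{N-1} (2/P) k 1 i + ((2-R)/P) k 1 (N-Q)`, and every
`(r 1, …, r N)` satisfying all the constraints has `∑_{i=1}^N r i ≥ ∑_{i=1}^N r̃ i`. -/
theorem stmt_17 (Q R N P : ℕ) (hQ : 1 ≤ Q) (hR : R ≤ 1)
    (hN : N + R = 2 * (Q + 1)) (hP : P + 2 = N)
    (k : ℕ → ℕ → ℝ) (lam : ℕ → ℕ → ℝ)
    (hlam1 : ∀ m n, 1 ≤ m → m < n → n ≤ N - Q →
      lam m n = k m N - k 1 N + k 1 (N - Q) - k (N - Q) N + k n N)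
    (hlam2 : ∀ m n, 1 ≤ m → m ≤ N - Q → N - Q < n → n ≤ N →
      lam m n = k m N - k 1 N + k 1 n)
    (hlam3 : ∀ m n, N - Q < m → m < n → n ≤ N →
      lam m n = k 1 m - k 1 N + k (N - Q) N - k 1 (N - Q) + k 1 n)
    (rb : ℝ)
    (hrb : rb = (∑ i ∈ Finset.Icc 1 (N - Q - 1), k i N) / P
      + (Q : ℝ) / P * k (N - Q) N
      + (∑ i ∈ Finset.Icc (N - Q + 1) (N - 1), k 1 i) / P
      + ((N : ℝ) - Q - 1) / P * k 1 (N - Q))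
    (rt : ℕ → ℝ)
    (hrt1 : ∀ i, 1 ≤ i → i ≤ N - Q → rt i = rb - k i N - k 1 (N - Q))
    (hrt2 : ∀ i, N - Q < i → i ≤ N → rt i = rb - k (N - Q) N - k 1 i) :
    (∀ m n, 1 ≤ m → m < n → n ≤ N →
      lam m n ≤ ∑ i ∈ Finset.Icc 1 N \ {m, n}, rt i) ∧
    (∑ i ∈ Finset.Icc 1 N, rt i
      = (2 - (P : ℝ)) / P * k 1 N
        + (∑ i ∈ Finset.Icc 2 (N - Q - 1), 2 / (P : ℝ) * k i N)
        + (R : ℝ) / P * k (N - Q) N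
        + (∑ i ∈ Finset.Icc (N - Q + 1) (N - 1), 2 / (P : ℝ) * k 1 i)
        + (2 - (R : ℝ)) / P * k 1 (N - Q)) ∧
    (∀ r : ℕ → ℝ,
      (∀ m n, 1 ≤ m → m < n → n ≤ N →
        lam m n ≤ ∑ i ∈ Finset.Icc 1 N \ {m, n}, r i) →
      ∑ i ∈ Finset.Icc 1 N, rt i ≤ ∑ i ∈ Finset.Icc 1 N, r i) :=
  stmt_17_general Q N P (R : ℝ) hQ (by lia) (mod_cast hN) hP k lam hlam1 hlam2 hlam3
    rb hrb rt hrt1 hrt2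
end

section
/- Let $N\ge 2$ and let $X_1,\dots,X_N$ be finite sets with $X=\bigcup_{i=1}^N X_i$ and $\overline X_i=X\setminus X_i$. If $(r_1,\dots,r_N)\in\mathbb R^N$ satisfies $\sum_{i\in\mathcal N} r_i\ge\bigl|\bigcap_{i\in[N]\setminus\mathcal N}\overline X_i\bigr|$ for every nonempty proper subset $\mathcal N\subsetneq[N]$, then $\sum_{i=1}^N r_i\ \ge\ \tfrac{1}{N-1}\sum_{j=1}^N|\overline X_j|$. Moreover, the vector with $\tilde r_i=\tfrac{1}{N-1}\sum_{j=1}^N|\overline X_j|-|\overline X_i|$ attains this bound, i.e., $\sum_{i=1}^N\tilde r_i=\tfrac{1}{N-1}\sum_{j=1}^N|\overline X_j|$, and satisfies each size-$(N-1)$ constraint with equality: $\sum_{i\ne j}\tilde r_i=|\overline X_j|$ for every $j\in[N]$. -/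
/-!
Adding up the `N` constraints of size `N - 1` counts every `r i` exactly `N - 1` times, which bounds
`∑ i, r i` from below whatever the right-hand sides `c j` are. Equality in all of these constraints
reads `∑ i, r i - r j = c j`; summing it over `j` determines `∑ i, r i`, and then each `r j`.
-/

section LeaveOneOut

open Finset

variable {ι K : Type*}

/-- The rate vector that meets every leave-one-out constraint `c j ≤ ∑ i ∈ s.erase j, r i` with
equality; it is the `r̃` of the paper when `c j = |X̄ j|`. The division requires `#s ≠ 1` in `K`. -/
def tightRates [Field K] (s : Finset ι) (c : ι → K) (i : ι) : K :=
  (∑ j ∈ s, c j) / ((#s : K) - 1) - c i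

theorem sum_tightRates [Field K] {s : Finset ι} (hs : (#s : K) ≠ 1) (c : ι → K) :
    ∑ i ∈ s, tightRates s c i = (∑ j ∈ s, c j) / ((#s : K) - 1) := by
  have card_sub_one_ne_zero : (#s : K) - 1 ≠ 0 := sub_ne_zero.mpr hs
  simp only [tightRates, sum_sub_distrib, sum_const, nsmul_eq_mul]
  field_simp
  ring

variable [DecidableEq ι]

theorem sum_sum_erase {M : Type*} [AddCommMonoid M] (s : Finset ι) (f : ι → M) :
    ∑ j ∈ s, ∑ i ∈ s.erase j, f i = (#s - 1) • ∑ i ∈ s, f i := by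
  calc
    ∑ j ∈ s, ∑ i ∈ s.erase j, f i = ∑ i ∈ s, ∑ _j ∈ s.erase i, f i :=
      sum_comm' fun i j => by grind
    _ = ∑ i ∈ s, (#s - 1) • f i :=
      sum_congr rfl fun i hi => by rw [sum_const, card_erase_of_mem hi]
    _ = (#s - 1) • ∑ i ∈ s, f i := sum_nsmul s _ f

theorem sum_div_card_sub_one_le_of_le_sum_erase [Field K] [LinearOrder K] [IsStrictOrderedRing K]
    {s : Finset ι} (hs : s.Nontrivial) {c r : ι → K}
    (hr : ∀ j ∈ s, c j ≤ ∑ i ∈ s.erase j, r i) :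
    (∑ j ∈ s, c j) / ((#s : K) - 1) ≤ ∑ i ∈ s, r i := by
  have one_lt_card : (1 : K) < #s := mod_cast one_lt_card_iff_nontrivial.mpr hs
  rw [div_le_iff₀' (sub_pos.mpr one_lt_card)]
  calc
    ∑ j ∈ s, c j ≤ ∑ j ∈ s, ∑ i ∈ s.erase j, r i := sum_le_sum hr
    _ = ((#s : K) - 1) * ∑ i ∈ s, r i := by
      rw [sum_sum_erase, nsmul_eq_mul, Nat.cast_pred hs.nonempty.card_pos]

theorem sum_erase_tightRates [Field K] {s : Finset ι} (hs : (#s : K) ≠ 1) (c : ι → K) {j : ι}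
    (hj : j ∈ s) : ∑ i ∈ s.erase j, tightRates s c i = c j := by
  rw [sum_erase_eq_sub hj, sum_tightRates hs, tightRates, sub_sub_cancel]

theorem apply_le_sum_erase_of_apply_inf_compl_le_sum {α M : Type*} [Fintype ι] [Nontrivial ι]
    [SemilatticeInf α] [OrderTop α] [AddCommMonoid M] [LE M] {v : α → M} {A : ι → α} {r : ι → M}
    (h : ∀ t : Finset ι, t.Nonempty → t ≠ univ → v (tᶜ.inf A) ≤ ∑ i ∈ t, r i) (j : ι) :
    v (A j) ≤ ∑ i ∈ univ.erase j, r i := by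
  have erase_nonempty : (univ.erase j).Nonempty := univ_nontrivial.erase_nonempty
  have erase_ne_univ : univ.erase j ≠ univ := erase_ne_self.mpr (mem_univ j)
  simpa only [compl_erase, compl_univ, insert_empty_eq, inf_singleton] using
    h (univ.erase j) erase_nonempty erase_ne_univ

theorem stmt_18_general [Field K] [LinearOrder K] [IsStrictOrderedRing K] [Fintype ι] [Nontrivial ι]
    {c r : ι → K} (hr : ∀ j, c j ≤ ∑ i ∈ univ.erase j, r i) :
    (∑ j, c j) / ((Fintype.card ι : K) - 1) ≤ ∑ i, r i ∧
      ∀ rt : ι → K, (∀ i, rt i = (∑ j, c j) / ((Fintype.card ι : K) - 1) - c i) →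
        ∑ i, rt i = (∑ j, c j) / ((Fintype.card ι : K) - 1) ∧
          ∀ j, ∑ i ∈ univ.erase j, rt i = c j := by
  refine ⟨sum_div_card_sub_one_le_of_le_sum_erase univ_nontrivial fun j _ => hr j, fun rt hrt => ?_⟩
  obtain rfl : rt = tightRates univ c := funext hrt
  have card_ne_one : (#(univ : Finset ι) : K) ≠ 1 := mod_cast Fintype.one_lt_card.ne'
  exact ⟨sum_tightRates card_ne_one c, fun j => sum_erase_tightRates card_ne_one c (mem_univ j)⟩

end LeaveOneOut

/-- deterministic content of Theorem 2, the Courtade–Xie–Wesel closed-form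
solution of LP(1): for clients `1,…,N` (`N ≥ 2`) with packet sets `X i`, ground set
`X = ⋃ i, X i` and `X̄ i = X \ X i`: if `(r 1, …, r N)` satisfies
`∑_{i ∈ 𝒩} r i ≥ |⋂_{i ∈ [N] \ 𝒩} X̄ i|` for every nonempty proper `𝒩 ⊊ [N]`, then
`∑_{i=1}^N r i ≥ (1/(N-1)) ∑_{j=1}^N |X̄ j|`.  Moreover, the vector with
`r̃ i = (1/(N-1)) ∑_{j=1}^N |X̄ j| - |X̄ i|` attains this bound,
`∑_i r̃ i = (1/(N-1)) ∑_j |X̄ j|`, and satisfies each size-`(N-1)` constraint with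
equality: `∑_{i ≠ j} r̃ i = |X̄ j|` for every `j`. -/
theorem stmt_18 {γ : Type*} [DecidableEq γ] [Fintype γ] (N : ℕ) (hN : 2 ≤ N)
    (X : Fin N → Finset γ) (r : Fin N → ℝ)
    (hfeas : ∀ 𝒩 : Finset (Fin N), 𝒩.Nonempty → 𝒩 ≠ Finset.univ →
      (((𝒩ᶜ.inf fun i => (Finset.univ.biUnion X) \ X i).card : ℝ) ≤ ∑ i ∈ 𝒩, r i)) :
    ((∑ j, (((Finset.univ.biUnion X) \ X j).card : ℝ)) / ((N : ℝ) - 1) ≤ ∑ i, r i) ∧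
    (∀ rt : Fin N → ℝ,
      (∀ i, rt i = (∑ j, (((Finset.univ.biUnion X) \ X j).card : ℝ)) / ((N : ℝ) - 1)
          - (((Finset.univ.biUnion X) \ X i).card : ℝ)) →
      ((∑ i, rt i = (∑ j, (((Finset.univ.biUnion X) \ X j).card : ℝ)) / ((N : ℝ) - 1)) ∧
        ∀ j, ∑ i ∈ Finset.univ.erase j, rt i
          = (((Finset.univ.biUnion X) \ X j).card : ℝ))) := by
  have : Nontrivial (Fin N) := Fin.nontrivial_iff_two_le.mpr hN
  simpa only [Fintype.card_fin] using stmt_18_general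
    (apply_le_sum_erase_of_apply_inf_compl_le_sum (v := fun s : Finset γ => (s.card : ℝ)) hfeas)
end
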